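/- Let α, β ≥ 0 with (α, β) ≠ (0, 0). Then there exist constants c₁, c₂ > 0, depending only on α, β, such that for every n ∈ ℕ: c₁·n^{−2} ≤ E(M² ∩ B_∞^{α,β}, P_n)_{w_{α,β}, 1} ≤ c₂·n^{−2}·ln(n+1). -/

import Mathlib

open MeasureTheory Set Filter
open scoped ENNReal

noncomputable section

/-- The Jacobi weight `w_{α,β}(x) = (1+x)^α (1-x)^β`. -/
def jacobi (α β : ℝ) (x : ℝ) : ℝ := (1 + x) ^ α * (1 - x) ^ β

/-- `φ(x) = √(1-x²)`. -/
def phiW (x : ℝ) : ℝ := Real.sqrt (1 - x ^ 2)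

/-- The `L^p` norm of `g` on the interval `[a,b]` (essential sup when `p = ∞`). -/
def LpOn (g : ℝ → ℝ) (p : ℝ≥0∞) (a b : ℝ) : ℝ≥0∞ :=
  eLpNorm g p (volume.restrict (Icc a b))

/-- The `k`-th symmetric difference `Δ_h^k(f,x)` relative to `[-1,1]`. -/
def symmDelta (k : ℕ) (h : ℝ) (f : ℝ → ℝ) (x : ℝ) : ℝ :=
  if (x - k * h / 2 ∈ Icc (-1 : ℝ) 1 ∧ x + k * h / 2 ∈ Icc (-1 : ℝ) 1) then
    ∑ i ∈ Finset.range (k + 1), ((k.choose i : ℝ) * (-1 : ℝ) ^ (k - i) * f (x - k * h / 2 + i * h))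
  else 0

/-- Main-part weighted modulus `Ω_φ^k(f,δ)_{w,p}`. -/
def OmegaMain (k : ℕ) (f : ℝ → ℝ) (δ : ℝ) (wt : ℝ → ℝ) (p : ℝ≥0∞) : ℝ≥0∞ :=
  ⨆ h ∈ Ioc (0 : ℝ) δ,
    LpOn (fun x => wt x * symmDelta k (h * phiW x) f x) p
      (-1 + 2 * (k : ℝ) ^ 2 * h ^ 2) (1 - 2 * (k : ℝ) ^ 2 * h ^ 2)

/-- Forward part `Ω→_φ^k(f,δ)_{w,p}`. -/
def OmegaFwd (k : ℕ) (f : ℝ → ℝ) (δ : ℝ) (wt : ℝ → ℝ) (p : ℝ≥0∞) : ℝ≥0∞ :=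
  ⨆ h ∈ Ioc (0 : ℝ) (2 * (k : ℝ) ^ 2 * δ ^ 2),
    LpOn (fun x => wt x * symmDelta k h f (x + k * h / 2)) p
      (-1) (-1 + 2 * (k : ℝ) ^ 2 * δ ^ 2)

/-- Backward part `Ω←_φ^k(f,δ)_{w,p}`. -/
def OmegaBwd (k : ℕ) (f : ℝ → ℝ) (δ : ℝ) (wt : ℝ → ℝ) (p : ℝ≥0∞) : ℝ≥0∞ :=
  ⨆ h ∈ Ioc (0 : ℝ) (2 * (k : ℝ) ^ 2 * δ ^ 2),
    LpOn (fun x => wt x * symmDelta k h f (x - k * h / 2)) p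
      (1 - 2 * (k : ℝ) ^ 2 * δ ^ 2) 1

/-- Weighted Ditzian–Totik modulus `ω_φ^k(f,δ)_{w,p}`. -/
def omegaDT (k : ℕ) (f : ℝ → ℝ) (δ : ℝ) (wt : ℝ → ℝ) (p : ℝ≥0∞) : ℝ≥0∞ :=
  OmegaMain k f δ wt p + OmegaFwd k f δ wt p + OmegaBwd k f δ wt p

/-- `f` is `k`-monotone on `(-1,1)`: all `k`-th divided differences over `k+1` distinct
points of `(-1,1)` are nonnegative. -/
def kMonotoneOn (k : ℕ) (f : ℝ → ℝ) : Prop :=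
  ∀ x : Fin (k + 1) → ℝ, Function.Injective x → (∀ i, x i ∈ Ioo (-1 : ℝ) 1) →
    0 ≤ ∑ i, f (x i) / ∏ j ∈ Finset.univ.erase i, (x i - x j)

/-- `M^k`, the class of `k`-monotone functions on `(-1,1)`. -/
def MSet (k : ℕ) : Set (ℝ → ℝ) := {f | kMonotoneOn k f}

/-- `M_+^k`, the `k`-monotone functions on `(-1,1)` vanishing on `(-1,0]`. -/
def MPlus (k : ℕ) : Set (ℝ → ℝ) :=
  {f | kMonotoneOn k f ∧ ∀ x : ℝ, -1 < x → x ≤ 0 → f x = 0}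

/-- `J_p = (-1/p, ∞)` for finite `p`, `[0,∞)` for `p = ∞`. -/
def Jset (p : ℝ≥0∞) : Set ℝ := if p = ∞ then Ici 0 else Ioi (-1 / p.toReal)

/-- `W_p^{α,β}`. -/
def WSet (p : ℝ≥0∞) (α β : ℝ) : Set (ℝ → ℝ) :=
  {f | Measurable f ∧ LpOn (fun x => jacobi α β x * f x) p (-1) 1 ≠ ⊤}

/-- `B_p^{α,β}`, the unit sphere of `W_p^{α,β}`. -/
def BSet (p : ℝ≥0∞) (α β : ℝ) : Set (ℝ → ℝ) :=
  {f | Measurable f ∧ LpOn (fun x => jacobi α β x * f x) p (-1) 1 = 1}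

/-- Best weighted approximation `E_n(f)_{w,q}` by polynomials of degree at most `n`. -/
def En (n : ℕ) (f : ℝ → ℝ) (wt : ℝ → ℝ) (q : ℝ≥0∞) : ℝ≥0∞ :=
  ⨅ P ∈ {P : Polynomial ℝ | P.natDegree ≤ n},
    LpOn (fun x => wt x * (f x - P.eval x)) q (-1) 1

/-- `E(X, P_n)_{w,q}`. -/
def EClass (X : Set (ℝ → ℝ)) (n : ℕ) (wt : ℝ → ℝ) (q : ℝ≥0∞) : ℝ≥0∞ :=
  ⨆ f ∈ X, En n f wt q

/-!
Upper bound. A convex `f` with `w_{α,β} |f| ≤ 1` is replaced by a polygon `L` interpolating it on a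
fine grid of `[-1 + δ, 1 - δ]`, with `δ` of order `n⁻²`; near the endpoints both `w f` and `w L`
are bounded, so `‖w (f - L)‖₁ = O(δ)`. Up to an affine function, `L` is a sum of truncated powers
`(x - t)₊` whose coefficients are the jumps of its slope. Integrating a Jackson-type kernel,
localized around `t` at the scale `φ(t) / n`, yields
`E_n((x - t)₊)_{w,1} = O(n⁻² w_{α+1,β+1}(t))`, so it remains to bound
`∑ (slope jump at t) * w_{α+1,β+1}(t)`. Convexity gives `|f'| w_{α+1,β+1} = O(1)`; summation by
parts then bounds this sum by the total variation of `log w_{α+1,β+1}` over the grid, which is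
`O(log n)`.

Lower bound. For a polynomial `P` of degree at most `N - 2`, the function `sin (N θ)` is orthogonal
to `P (cos θ) sin θ` on `[0, π]`, while its pairing with `|cos θ| sin θ` is of order `N⁻²` for odd
`N`. By duality and rescaling, `|x|` is at distance at least `c n⁻²` from `P_n` in `L¹[-1/2, 1/2]`,
where the weight is bounded below.
-/

section Chebyshev

open Polynomial

theorem abs_sin_nat_mul_le (n : ℕ) (u : ℝ) : |Real.sin (n * u)| ≤ n * |Real.sin u| := by
  induction n with
  | zero => simp
  | succ k ih =>
    have cos_mul_le (a b : ℝ) : |Real.cos a| * |b| ≤ |b| :=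
      mul_le_of_le_one_left (abs_nonneg _) (Real.abs_cos_le_one _)
    calc |Real.sin ((k + 1 : ℕ) * u)|
        = |Real.cos u * Real.sin (k * u) + Real.cos (k * u) * Real.sin u| := by
          rw [Nat.cast_succ, add_mul, one_mul, Real.sin_add, mul_comm (Real.cos u)]
      _ ≤ |Real.cos u| * |Real.sin (k * u)| + |Real.cos (k * u)| * |Real.sin u| := by
          simpa only [abs_mul] using abs_add_le (Real.cos u * _) (Real.cos (k * u) * _)
      _ ≤ |Real.sin (k * u)| + |Real.sin u| := add_le_add (cos_mul_le _ _) (cos_mul_le _ _)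
      _ ≤ (k + 1 : ℕ) * |Real.sin u| := by push_cast; linarith

theorem phiW_cos (a : ℝ) : phiW (Real.cos a) = |Real.sin a| := by
  rw [phiW, ← Real.sin_sq, Real.sqrt_sq_eq_abs]

theorem phiW_sq {t : ℝ} (ht : t ∈ Icc (-1 : ℝ) 1) : phiW t ^ 2 = (1 + t) * (1 - t) := by
  rw [phiW, Real.sq_sqrt (by nlinarith [ht.1, ht.2])]
  ring

theorem sin_le_two_mul_sin_half_add {a b : ℝ} (ha : a ∈ Icc 0 Real.pi) (hb : b ∈ Icc 0 Real.pi) :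
    Real.sin b ≤ 2 * Real.sin ((a + b) / 2) := by
  have sin_a : 0 ≤ Real.sin a := Real.sin_nonneg_of_mem_Icc ha
  have sin_mid : 0 ≤ Real.sin ((a + b) / 2) :=
    Real.sin_nonneg_of_nonneg_of_le_pi (by linarith [ha.1, hb.1]) (by linarith [ha.2, hb.2])
  have := mul_le_of_le_one_right (mul_nonneg zero_le_two sin_mid) (Real.cos_le_one ((a - b) / 2))
  linarith [Real.sin_add_sin a b]

theorem abs_eval_T_sub_eval_T_mul_phiW_le (N : ℕ) {y e : ℝ} (hy : y ∈ Icc (-1 : ℝ) 1)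
    (he : e ∈ Icc (-1 : ℝ) 1) :
    |(Chebyshev.T ℝ N).eval y - (Chebyshev.T ℝ N).eval e| * phiW e ≤ 2 * N * |y - e| := by
  obtain ⟨a, ha, rfl⟩ := Real.surjOn_cos hy
  obtain ⟨b, hb, rfl⟩ := Real.surjOn_cos he
  have sin_b : 0 ≤ Real.sin b := Real.sin_nonneg_of_mem_Icc hb
  have sin_le := sin_le_two_mul_sin_half_add ha hb
  have numerator_le :
      |Real.cos (N * a) - Real.cos (N * b)| ≤ 2 * (N * |Real.sin ((a - b) / 2)|) := by
    rw [Real.cos_sub_cos, ← mul_sub, mul_div_assoc]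
    simp only [abs_mul, abs_neg, Nat.abs_ofNat]
    exact mul_le_mul (mul_le_of_le_one_right zero_le_two (Real.abs_sin_le_one _))
      (abs_sin_nat_mul_le N _) (abs_nonneg _) zero_le_two
  calc |(Chebyshev.T ℝ N).eval (Real.cos a) - (Chebyshev.T ℝ N).eval (Real.cos b)| *
        phiW (Real.cos b)
      = |Real.cos (N * a) - Real.cos (N * b)| * Real.sin b := by
        rw [Chebyshev.T_real_cos, Chebyshev.T_real_cos, phiW_cos, abs_of_nonneg sin_b,
          Int.cast_natCast]
    _ ≤ 2 * (N * |Real.sin ((a - b) / 2)|) * (2 * Real.sin ((a + b) / 2)) := by gcongr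
    _ = 2 * N * |Real.cos a - Real.cos b| := by
        rw [Real.cos_sub_cos, abs_mul, abs_mul, abs_neg, Nat.abs_ofNat,
          abs_of_nonneg (by linarith : 0 ≤ Real.sin ((a + b) / 2))]
        ring

theorem exists_int_one_le_abs_cos_sub (x v : ℝ) :
    ∃ k : ℤ, |(k : ℝ) - x| ≤ 1 ∧ 1 ≤ |Real.cos (k * Real.pi) - v| := by
  rcases le_total 0 v with hv | hv
  · refine ⟨2 * round ((x - 1) / 2) + 1, ?_, ?_⟩
    · have := abs_le.1 (abs_sub_round ((x - 1) / 2))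
      push_cast
      rw [abs_le]
      constructor <;> linarith [this.1, this.2]
    · rw [show ((2 * round ((x - 1) / 2) + 1 : ℤ) : ℝ) * Real.pi
          = Real.pi + round ((x - 1) / 2) * (2 * Real.pi) by push_cast; ring,
        Real.cos_add_int_mul_two_pi, Real.cos_pi, abs_of_nonpos] <;> linarith
  · refine ⟨2 * round (x / 2), ?_, ?_⟩
    · have := abs_le.1 (abs_sub_round (x / 2))
      push_cast
      rw [abs_le]
      constructor <;> linarith [this.1, this.2]
    · rw [show ((2 * round (x / 2) : ℤ) : ℝ) * Real.pi
          = 0 + round (x / 2) * (2 * Real.pi) by push_cast; ring,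
        Real.cos_add_int_mul_two_pi, Real.cos_zero, abs_of_nonneg] <;> linarith

theorem abs_cos_sub_cos_le {a b h : ℝ} (hab : |a - b| ≤ 2 * h) :
    |Real.cos a - Real.cos b| ≤ 2 * (|Real.sin b| + h) * h := by
  have half_le : |(a - b) / 2| ≤ h := by
    rw [abs_div, Nat.abs_ofNat]
    linarith
  have sin_mid : |Real.sin ((a + b) / 2)| ≤ |Real.sin b| + h := by
    have := Real.abs_sin_sub_sin_le ((a + b) / 2) b
    rw [show (a + b) / 2 - b = (a - b) / 2 by ring] at this
    linarith [abs_sub_abs_le_abs_sub (Real.sin ((a + b) / 2)) (Real.sin b)]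
  rw [Real.cos_sub_cos, abs_mul, abs_mul, abs_neg, Nat.abs_ofNat]
  have sin_half : |Real.sin ((a - b) / 2)| ≤ h := Real.abs_sin_le_abs.trans half_le
  gcongr
  exact mul_nonneg zero_le_two ((abs_nonneg _).trans sin_mid)

/- The point `e` is a nearby extremum of `T_N`, of the sign opposite to `T_N(t)`. -/
theorem exists_one_le_abs_eval_T_sub (N : ℕ) (hN : 1 ≤ N) {t : ℝ} (ht : t ∈ Icc (-1 : ℝ) 1)
    (hφ : 8 / N ≤ phiW t) :
    ∃ e ∈ Icc (-1 : ℝ) 1,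
      1 ≤ |(Chebyshev.T ℝ N).eval e - (Chebyshev.T ℝ N).eval t| ∧
      |e - t| ≤ 5 * (phiW t / N) ∧ phiW t / 2 ≤ phiW e := by
  obtain ⟨s, -, rfl⟩ := Real.surjOn_cos ht
  have hN' : (0 : ℝ) < N := by exact_mod_cast hN
  obtain ⟨k, k_near, k_far⟩ := exists_int_one_le_abs_cos_sub (N * s / Real.pi)
    ((Chebyshev.T ℝ N).eval (Real.cos s))
  set a : ℝ := k * Real.pi / N with ha
  have a_near : |a - s| ≤ 2 * (2 / N) := by
    have : a - s = (k - N * s / Real.pi) * (Real.pi / N) := by rw [ha]; field_simp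
    rw [this, abs_mul, abs_of_pos (div_pos Real.pi_pos hN')]
    calc |(k : ℝ) - N * s / Real.pi| * (Real.pi / N) ≤ 1 * (4 / N) := by
          gcongr
          exact Real.pi_le_four
      _ = 2 * (2 / N) := by ring
  rw [phiW_cos] at hφ ⊢
  rw [show (8 : ℝ) / N = 4 * (2 / N) by ring] at hφ
  refine ⟨Real.cos a, Real.cos_mem_Icc a, ?_, ?_, ?_⟩
  · rwa [Chebyshev.T_real_cos, Int.cast_natCast, mul_div_cancel₀ _ hN'.ne']
  · calc |Real.cos a - Real.cos s| ≤ 2 * (|Real.sin s| + 2 / N) * (2 / N) :=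
          abs_cos_sub_cos_le a_near
      _ ≤ 2 * (|Real.sin s| + |Real.sin s| / 4) * (2 / N) :=
          mul_le_mul_of_nonneg_right (by linarith) (by positivity)
      _ = 5 * (|Real.sin s| / N) := by ring
  · rw [phiW_cos]
    have := Real.abs_sin_sub_sin_le s a
    rw [abs_sub_comm s a] at this
    linarith [abs_sub_abs_le_abs_sub (Real.sin s) (Real.sin a)]

end Chebyshev

section LocalizedKernels

open Polynomial

theorem phiW_pos {t : ℝ} (ht : t ∈ Ioo (-1 : ℝ) 1) : 0 < phiW t :=
  Real.sqrt_pos.2 (by nlinarith [ht.1, ht.2])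

/-- The length `φ(t) / N` on which polynomials of degree `N` resolve details near `t`. -/
def localScale (N : ℕ) (t : ℝ) : ℝ := phiW t / N

/-- The difference quotient `(T_N(x) - T_N(t)) / (x - t)` of the Chebyshev polynomial `T_N`. Its
even powers are the raw material for kernels concentrated at `t` on the length `localScale N t`. -/
def chebyshevQuotient (N : ℕ) (t : ℝ) : ℝ[X] :=
  (Chebyshev.T ℝ N - C ((Chebyshev.T ℝ N).eval t)) /ₘ (X - C t)

/-- The polynomial `D` has integral `1` over `[-1, 1]` and decays, away from `t`, like the power
`-m` of the distance to `t` measured in units of `ρ`. -/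
structure IsLocalizedKernel (m : ℕ) (B ρ t : ℝ) (D : ℝ[X]) : Prop where
  integral_eq_one : ∫ y in (-1 : ℝ)..1, D.eval y = 1
  decay : ∀ y ∈ Icc (-1 : ℝ) 1, |D.eval y| * ρ * (1 + |y - t| / ρ) ^ m ≤ B

theorem intervalIntegrable_eval (D : ℝ[X]) (a b : ℝ) :
    IntervalIntegrable (fun y ↦ D.eval y) volume a b :=
  D.continuous.intervalIntegrable a b

variable {N : ℕ} {t y : ℝ}

theorem localScale_pos (hN : 1 ≤ N) (ht : t ∈ Ioo (-1 : ℝ) 1) : 0 < localScale N t :=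
  div_pos (phiW_pos ht) (by exact_mod_cast hN)

theorem natDegree_chebyshevQuotient_le (N : ℕ) (t : ℝ) :
    (chebyshevQuotient N t).natDegree ≤ N - 1 := by
  rw [chebyshevQuotient, natDegree_divByMonic _ (monic_X_sub_C t), natDegree_sub_C,
    Chebyshev.natDegree_T, natDegree_X_sub_C, Int.natAbs_natCast]

theorem eval_T_sub_eval_T (N : ℕ) (t y : ℝ) :
    (Chebyshev.T ℝ N).eval y - (Chebyshev.T ℝ N).eval t
      = (y - t) * (chebyshevQuotient N t).eval y := by
  have root : (Chebyshev.T ℝ N - C ((Chebyshev.T ℝ N).eval t)).IsRoot t := by simp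
  simpa [chebyshevQuotient] using (congrArg (eval y) (mul_divByMonic_eq_iff_isRoot.2 root)).symm

theorem abs_eval_chebyshevQuotient_mul_abs_sub_le (ht : t ∈ Icc (-1 : ℝ) 1)
    (hy : y ∈ Icc (-1 : ℝ) 1) : |(chebyshevQuotient N t).eval y| * |y - t| ≤ 2 := by
  rw [mul_comm, ← abs_mul, ← eval_T_sub_eval_T]
  linarith [abs_sub ((Chebyshev.T ℝ N).eval y) ((Chebyshev.T ℝ N).eval t),
    Chebyshev.abs_eval_T_real_le_one N (abs_le.2 hy),
    Chebyshev.abs_eval_T_real_le_one N (abs_le.2 ht)]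

theorem abs_eval_chebyshevQuotient_mul_phiW_le (ht : t ∈ Ioo (-1 : ℝ) 1)
    (hy : y ∈ Icc (-1 : ℝ) 1) : |(chebyshevQuotient N t).eval y| * phiW t ≤ 2 * N := by
  have off_diagonal {x : ℝ} (hx : x ∈ Icc (-1 : ℝ) 1) (hxt : x ≠ t) :
      |(chebyshevQuotient N t).eval x| * phiW t ≤ 2 * N := by
    have lip := abs_eval_T_sub_eval_T_mul_phiW_le N hx (Ioo_subset_Icc_self ht)
    rw [eval_T_sub_eval_T, abs_mul, mul_assoc, mul_comm (2 * (N : ℝ))] at lip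
    exact le_of_mul_le_mul_left lip (abs_pos.2 (sub_ne_zero.2 hxt))
  rcases eq_or_ne y t with rfl | hyt
  · have cont : Continuous fun x ↦ |(chebyshevQuotient N y).eval x| * phiW y := by fun_prop
    have limit := (cont.tendsto y).mono_left (nhdsWithin_le_nhds (s := {y}ᶜ))
    refine le_of_tendsto limit ?_
    filter_upwards [nhdsWithin_le_nhds (Icc_mem_nhds ht.1 ht.2), self_mem_nhdsWithin]
      with x hx hxy using off_diagonal hx hxy
  · exact off_diagonal hy hyt

theorem abs_eval_chebyshevQuotient_decay (hN : 1 ≤ N) (ht : t ∈ Ioo (-1 : ℝ) 1)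
    (hy : y ∈ Icc (-1 : ℝ) 1) :
    |(chebyshevQuotient N t).eval y| * localScale N t * (1 + |y - t| / localScale N t) ≤ 4 := by
  have hN' : (0 : ℝ) < N := by exact_mod_cast hN
  have near : |(chebyshevQuotient N t).eval y| * localScale N t ≤ 2 := by
    rw [localScale, ← mul_div_assoc, div_le_iff₀ hN']
    exact abs_eval_chebyshevQuotient_mul_phiW_le ht hy
  have far := abs_eval_chebyshevQuotient_mul_abs_sub_le (N := N) (Ioo_subset_Icc_self ht) hy
  have := localScale_pos hN ht
  rw [mul_add, mul_one, mul_assoc _ (localScale N t), mul_div_cancel₀ _ this.ne']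
  linarith

theorem Icc_localScale_subset {e : ℝ} (hN : 1 ≤ N) (ht : t ∈ Ioo (-1 : ℝ) 1)
    (hφ : 8 / N ≤ phiW t) (he : e ∈ Icc (-1 : ℝ) 1) (hφe : phiW t / 2 ≤ phiW e) :
    Icc (e - localScale N t / 8) (e + localScale N t / 8) ⊆ Icc (-1) 1 := by
  have φ_pos := phiW_pos ht
  have scale_le : 8 * localScale N t ≤ phiW t ^ 2 := by
    calc 8 * localScale N t = 8 / N * phiW t := by rw [localScale]; ring
      _ ≤ phiW t * phiW t := by gcongr
      _ = phiW t ^ 2 := (sq _).symm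
  have φ_sq_le : (phiW t / 2) ^ 2 ≤ (1 + e) * (1 - e) := by
    rw [← phiW_sq he]
    gcongr
  have scale_pos := localScale_pos hN ht
  apply Icc_subset_Icc <;> nlinarith [he.1, he.2]

theorem exists_forall_le_abs_eval_chebyshevQuotient (hN : 1 ≤ N) (ht : t ∈ Ioo (-1 : ℝ) 1)
    (hφ : 8 / N ≤ phiW t) :
    ∃ e, Icc (e - localScale N t / 8) (e + localScale N t / 8) ⊆ Icc (-1 : ℝ) 1 ∧
      ∀ y ∈ Icc (e - localScale N t / 8) (e + localScale N t / 8),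
        (12 * localScale N t)⁻¹ ≤ |(chebyshevQuotient N t).eval y| := by
  have φ_pos := phiW_pos ht
  have ρ_pos := localScale_pos hN ht
  obtain ⟨e, he, T_gap, e_near, hφe⟩ :=
    exists_one_le_abs_eval_T_sub N hN (Ioo_subset_Icc_self ht) hφ
  have hsub := Icc_localScale_subset hN ht hφ he hφe
  refine ⟨e, hsub, fun y hy ↦ ?_⟩
  have y_near : |y - e| ≤ localScale N t / 8 := by
    rw [abs_le]
    constructor <;> linarith [hy.1, hy.2]
  have T_near : |(Chebyshev.T ℝ N).eval y - (Chebyshev.T ℝ N).eval e| ≤ 1 / 2 := by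
    refine le_of_mul_le_mul_right (?_ : _ * (phiW t / 2) ≤ _) (half_pos φ_pos)
    calc |(Chebyshev.T ℝ N).eval y - (Chebyshev.T ℝ N).eval e| * (phiW t / 2)
        ≤ |(Chebyshev.T ℝ N).eval y - (Chebyshev.T ℝ N).eval e| * phiW e := by gcongr
      _ ≤ 2 * N * |y - e| := abs_eval_T_sub_eval_T_mul_phiW_le N (hsub hy) he
      _ ≤ 2 * N * (localScale N t / 8) := by gcongr
      _ = 1 / 2 * (phiW t / 2) := by rw [localScale]; field_simp; norm_num
  have T_far : 1 / 2 ≤ |y - t| * |(chebyshevQuotient N t).eval y| := by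
    rw [← abs_mul, ← eval_T_sub_eval_T]
    have := abs_sub_le ((Chebyshev.T ℝ N).eval e) ((Chebyshev.T ℝ N).eval y)
      ((Chebyshev.T ℝ N).eval t)
    rw [abs_sub_comm ((Chebyshev.T ℝ N).eval e) ((Chebyshev.T ℝ N).eval y)] at this
    linarith
  have y_near_t : |y - t| ≤ 6 * localScale N t := by
    rw [← localScale] at e_near
    linarith [abs_sub_le y e t]
  rw [inv_le_iff_one_le_mul₀' (by positivity)]
  nlinarith [mul_le_mul_of_nonneg_right y_near_t (abs_nonneg ((chebyshevQuotient N t).eval y))]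

theorem le_integral_chebyshevQuotient_pow (r : ℕ) (hN : 1 ≤ N) (ht : t ∈ Ioo (-1 : ℝ) 1)
    (hφ : 8 / N ≤ phiW t) :
    localScale N t / 4 * (12 * localScale N t)⁻¹ ^ (2 * r)
      ≤ ∫ y in (-1 : ℝ)..1, (chebyshevQuotient N t ^ (2 * r)).eval y := by
  have ρ_pos := localScale_pos hN ht
  obtain ⟨e, hsub, lower⟩ := exists_forall_le_abs_eval_chebyshevQuotient hN ht hφ
  set ρ := localScale N t
  have pow_lower : ∀ y ∈ Icc (e - ρ / 8) (e + ρ / 8),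
      (12 * ρ)⁻¹ ^ (2 * r) ≤ (chebyshevQuotient N t ^ (2 * r)).eval y := by
    intro y hy
    rw [eval_pow, ← (even_two_mul r).pow_abs (eval y _)]
    exact pow_le_pow_left₀ (by positivity) (lower y hy) _
  have pow_nonneg : ∀ y, 0 ≤ (chebyshevQuotient N t ^ (2 * r)).eval y := fun y ↦ by
    rw [eval_pow]
    exact (even_two_mul r).pow_nonneg _
  calc ρ / 4 * (12 * ρ)⁻¹ ^ (2 * r)
      = ∫ _ in (e - ρ / 8)..(e + ρ / 8), (12 * ρ)⁻¹ ^ (2 * r) := by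
        rw [intervalIntegral.integral_const, smul_eq_mul]
        ring
    _ ≤ ∫ y in (e - ρ / 8)..(e + ρ / 8), (chebyshevQuotient N t ^ (2 * r)).eval y :=
        intervalIntegral.integral_mono_on (by linarith) (by simp) (intervalIntegrable_eval _ _ _)
          pow_lower
    _ ≤ ∫ y in (-1 : ℝ)..1, (chebyshevQuotient N t ^ (2 * r)).eval y :=
        intervalIntegral.integral_mono_interval (hsub (left_mem_Icc.2 (by linarith))).1
          (by linarith) (hsub (right_mem_Icc.2 (by linarith))).2 (Eventually.of_forall pow_nonneg)
          (intervalIntegrable_eval _ _ _)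

theorem exists_nonneg_isLocalizedKernel (r : ℕ) (hN : 1 ≤ N) (ht : t ∈ Ioo (-1 : ℝ) 1)
    (hφ : 8 / N ≤ phiW t) :
    ∃ D : ℝ[X], D.natDegree ≤ 2 * r * (N - 1) ∧ (∀ y, 0 ≤ D.eval y) ∧
      IsLocalizedKernel (2 * r) (4 * 48 ^ (2 * r)) (localScale N t) t D := by
  have ρ_pos := localScale_pos hN ht
  set R := chebyshevQuotient N t
  have lower := le_integral_chebyshevQuotient_pow r hN ht hφ
  have decay (y) (hy : y ∈ Icc (-1 : ℝ) 1) := abs_eval_chebyshevQuotient_decay hN ht hy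
  set ρ := localScale N t
  set I := ∫ y in (-1 : ℝ)..1, (R ^ (2 * r)).eval y with hI
  have I_pos : 0 < I := lt_of_lt_of_le (by positivity) lower
  have eval_nonneg : ∀ y, 0 ≤ (C I⁻¹ * R ^ (2 * r)).eval y := fun y ↦ by
    rw [eval_mul, eval_C, eval_pow]
    exact mul_nonneg (by positivity) ((even_two_mul r).pow_nonneg _)
  refine ⟨C I⁻¹ * R ^ (2 * r), ?_, eval_nonneg, ?_, fun y hy ↦ ?_⟩
  · refine (natDegree_C_mul_le _ _).trans (natDegree_pow_le.trans ?_)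
    gcongr
    exact natDegree_chebyshevQuotient_le N t
  · simp only [eval_mul, eval_C, intervalIntegral.integral_const_mul, ← hI]
    exact inv_mul_cancel₀ I_pos.ne'
  · have I_inv_le : I⁻¹ ≤ 4 / ρ * (12 * ρ) ^ (2 * r) := by
      refine (inv_anti₀ (by positivity) lower).trans_eq ?_
      rw [mul_inv, inv_div, inv_pow, inv_inv]
    rw [abs_of_nonneg (eval_nonneg y), eval_mul, eval_C, eval_pow, ← (even_two_mul r).pow_abs]
    calc I⁻¹ * |R.eval y| ^ (2 * r) * ρ * (1 + |y - t| / ρ) ^ (2 * r)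
        ≤ 4 / ρ * (12 * ρ) ^ (2 * r) * |R.eval y| ^ (2 * r) * ρ *
            (1 + |y - t| / ρ) ^ (2 * r) := by gcongr
      _ = 4 * 12 ^ (2 * r) * (|R.eval y| * ρ * (1 + |y - t| / ρ)) ^ (2 * r) := by
          rw [mul_pow, mul_pow, mul_pow]
          field_simp
      _ ≤ 4 * 12 ^ (2 * r) * 4 ^ (2 * r) := by
          gcongr
          exact decay y hy
      _ = 4 * 48 ^ (2 * r) := by rw [mul_assoc, ← mul_pow]; norm_num

end LocalizedKernels

section Lorentz

/-- The Lorentz bump of height `1` and width `ρ` at `c`, an integrable majorant for kernels. -/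
def lorentz (c ρ x : ℝ) : ℝ := (1 + ((x - c) / ρ) ^ 2)⁻¹

theorem lorentz_nonneg (c ρ x : ℝ) : 0 ≤ lorentz c ρ x := by
  unfold lorentz
  positivity

theorem integrable_lorentz (c : ℝ) {ρ : ℝ} (hρ : 0 < ρ) : Integrable (lorentz c ρ) :=
  (integrable_inv_one_add_sq.comp_div hρ.ne').comp_sub_right c

theorem integral_lorentz (c : ℝ) {ρ : ℝ} (hρ : 0 < ρ) : ∫ x, lorentz c ρ x = ρ * Real.pi := by
  simp only [lorentz]
  rw [integral_sub_right_eq_self (fun y : ℝ ↦ (1 + (y / ρ) ^ 2)⁻¹) c,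
    Measure.integral_comp_div (fun y : ℝ ↦ (1 + y ^ 2)⁻¹), integral_univ_inv_one_add_sq,
    abs_of_pos hρ, smul_eq_mul]

theorem intervalIntegrable_lorentz (c : ℝ) {ρ : ℝ} (hρ : 0 < ρ) (a b : ℝ) :
    IntervalIntegrable (lorentz c ρ) volume a b :=
  (integrable_lorentz c hρ).intervalIntegrable

theorem intervalIntegral_lorentz_le (c : ℝ) {ρ a b : ℝ} (hρ : 0 < ρ) (hab : a ≤ b) :
    ∫ x in a..b, lorentz c ρ x ≤ ρ * Real.pi := by
  rw [intervalIntegral.integral_of_le hab, ← integral_lorentz c hρ]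
  exact setIntegral_le_integral (integrable_lorentz c hρ)
    (Eventually.of_forall (lorentz_nonneg c ρ))

end Lorentz

section Centering

open Polynomial

/-- The `j`-th moment about `t` of the density `D` on `[-1, 1]`. -/
def moment (D : ℝ[X]) (t : ℝ) (j : ℕ) : ℝ := ∫ y in (-1 : ℝ)..1, (y - t) ^ j * D.eval y

theorem intervalIntegrable_moment (D : ℝ[X]) (t : ℝ) (j : ℕ) (a b : ℝ) :
    IntervalIntegrable (fun y ↦ (y - t) ^ j * D.eval y) volume a b :=
  Continuous.intervalIntegrable (by fun_prop) a b

theorem moment_linear_mul (D : ℝ[X]) (t p q : ℝ) (j : ℕ) :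
    moment (D * (C p - C q * (X - C t))) t j = p * moment D t j - q * moment D t (j + 1) := by
  have expand (y : ℝ) : (y - t) ^ j * (D * (C p - C q * (X - C t))).eval y
      = p * ((y - t) ^ j * D.eval y) - q * ((y - t) ^ (j + 1) * D.eval y) := by
    simp only [eval_mul, eval_sub, eval_C, eval_X]
    ring
  simp only [moment, expand]
  rw [intervalIntegral.integral_sub ((intervalIntegrable_moment D t j _ _).const_mul p)
      ((intervalIntegrable_moment D t (j + 1) _ _).const_mul q),
    intervalIntegral.integral_const_mul, intervalIntegral.integral_const_mul]

theorem moment_two_about_mean {D : ℝ[X]} {t : ℝ} (hD : moment D t 0 = 1) :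
    moment D (t + moment D t 1) 2 = moment D t 2 - moment D t 1 ^ 2 := by
  set μ := moment D t 1 with hμ
  have expand (y : ℝ) : (y - (t + μ)) ^ 2 * D.eval y
      = (y - t) ^ 2 * D.eval y - 2 * μ * ((y - t) ^ 1 * D.eval y)
        + μ ^ 2 * ((y - t) ^ 0 * D.eval y) := by ring
  have integrable (j : ℕ) := intervalIntegrable_moment D t j (-1) 1
  rw [moment, intervalIntegral.integral_congr fun y _ ↦ expand y,
    intervalIntegral.integral_add ((integrable 2).sub ((integrable 1).const_mul _))
      ((integrable 0).const_mul _),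
    intervalIntegral.integral_sub (integrable 2) ((integrable 1).const_mul _),
    intervalIntegral.integral_const_mul, intervalIntegral.integral_const_mul,
    ← moment, ← moment, ← moment, hD, ← hμ]
  ring

/-- The multiple of `D` by an affine function whose mean is at `t`, given that `D` has integral `1`
over `[-1, 1]`. The denominator is the variance of `D`. -/
def centeredKernel (D : ℝ[X]) (t : ℝ) : ℝ[X] :=
  D * (C (moment D t 2 / (moment D t 2 - moment D t 1 ^ 2))
    - C (moment D t 1 / (moment D t 2 - moment D t 1 ^ 2)) * (X - C t))

theorem natDegree_centeredKernel_le (D : ℝ[X]) (t : ℝ) :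
    (centeredKernel D t).natDegree ≤ D.natDegree + 1 := by
  refine natDegree_mul_le.trans (Nat.add_le_add_left ?_ _)
  compute_degree

theorem moment_centeredKernel_zero {D : ℝ[X]} {t : ℝ} (hD : moment D t 0 = 1)
    (hV : 0 < moment D t 2 - moment D t 1 ^ 2) : moment (centeredKernel D t) t 0 = 1 := by
  rw [centeredKernel, moment_linear_mul, hD, zero_add]
  field_simp

theorem moment_centeredKernel_one (D : ℝ[X]) (t : ℝ) :
    moment (centeredKernel D t) t 1 = 0 := by
  rw [centeredKernel, moment_linear_mul]
  ring

namespace IsLocalizedKernel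

variable {m : ℕ} {B ρ t : ℝ} {D : ℝ[X]}

theorem moment_zero (hD : IsLocalizedKernel m B ρ t D) (c : ℝ) : moment D c 0 = 1 := by
  simpa [moment] using hD.integral_eq_one

theorem abs_eval_le (hD : IsLocalizedKernel m B ρ t D) (hρ : 0 < ρ) {y : ℝ}
    (hy : y ∈ Icc (-1 : ℝ) 1) : |D.eval y| ≤ B / ρ := by
  rw [le_div_iff₀ hρ]
  refine (le_mul_of_one_le_right (by positivity) (one_le_pow₀ ?_)).trans (hD.decay y hy)
  exact le_add_of_nonneg_right (by positivity)

theorem mono {k : ℕ} (hD : IsLocalizedKernel m B ρ t D) (hρ : 0 < ρ) (hkm : k ≤ m) :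
    IsLocalizedKernel k B ρ t D where
  integral_eq_one := hD.integral_eq_one
  decay y hy := by
    refine le_trans ?_ (hD.decay y hy)
    gcongr
    exact le_add_of_nonneg_right (by positivity)

theorem sq_mul_abs_eval_le_lorentz (hD : IsLocalizedKernel 4 B ρ t D) (hρ : 0 < ρ) {y : ℝ}
    (hy : y ∈ Icc (-1 : ℝ) 1) : (y - t) ^ 2 * |D.eval y| ≤ B * ρ * lorentz t ρ y := by
  set u := |y - t| / ρ with hu
  have : 0 ≤ u := by positivity
  have sq_eq : (y - t) ^ 2 = ρ ^ 2 * u ^ 2 := by rw [hu, div_pow, sq_abs]; field_simp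
  have lorentz_eq : lorentz t ρ y = (1 + u ^ 2)⁻¹ := by
    rw [lorentz, hu, div_pow, div_pow, sq_abs]
  have pow_le : u ^ 2 * (1 + u ^ 2) ≤ (1 + u) ^ 4 := by
    have : 0 ≤ 1 + 4 * u + 5 * u ^ 2 + 4 * u ^ 3 := by positivity
    linarith [show (1 + u) ^ 4 = u ^ 2 * (1 + u ^ 2) + (1 + 4 * u + 5 * u ^ 2 + 4 * u ^ 3) by ring]
  rw [lorentz_eq, ← div_eq_mul_inv, le_div_iff₀ (by positivity), sq_eq]
  calc ρ ^ 2 * u ^ 2 * |D.eval y| * (1 + u ^ 2)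
      = ρ * (|D.eval y| * ρ * (u ^ 2 * (1 + u ^ 2))) := by ring
    _ ≤ ρ * (|D.eval y| * ρ * (1 + u) ^ 4) := by gcongr
    _ ≤ ρ * B := by gcongr; exact hD.decay y hy
    _ = B * ρ := mul_comm _ _

theorem moment_two_le (hD : IsLocalizedKernel 4 B ρ t D) (hB : 0 < B) (hρ : 0 < ρ) :
    moment D t 2 ≤ Real.pi * B * ρ ^ 2 := by
  calc moment D t 2 ≤ ∫ y in (-1 : ℝ)..1, B * ρ * lorentz t ρ y :=
        intervalIntegral.integral_mono_on (by norm_num) (intervalIntegrable_moment D t 2 _ _)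
          ((intervalIntegrable_lorentz t hρ _ _).const_mul _) fun y hy ↦
            (mul_le_mul_of_nonneg_left (le_abs_self _) (sq_nonneg _)).trans
              (hD.sq_mul_abs_eval_le_lorentz hρ hy)
    _ = B * ρ * ∫ y in (-1 : ℝ)..1, lorentz t ρ y := intervalIntegral.integral_const_mul _ _
    _ ≤ B * ρ * (ρ * Real.pi) := by
        gcongr
        exact intervalIntegral_lorentz_le t hρ (by norm_num)
    _ = Real.pi * B * ρ ^ 2 := by ring

/- A density bounded by `B / ρ` puts half of its mass at distance at least `ε = ρ / (2 π B)` from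
any point; the Lorentz bump serves as a smooth cut-off at that distance. -/
theorem le_moment_two (hD : IsLocalizedKernel m B ρ t D) (hB : 0 < B) (hρ : 0 < ρ)
    (hD0 : ∀ y, 0 ≤ D.eval y) (c : ℝ) :
    ρ ^ 2 / (8 * Real.pi ^ 2 * B ^ 2) ≤ moment D c 2 := by
  set ε := ρ / (2 * Real.pi * B) with hε
  have ε_pos : 0 < ε := by positivity
  have integrable_D := intervalIntegrable_eval D (-1) 1
  have integrable_cutoff := (intervalIntegrable_lorentz c ε_pos (-1) 1).const_mul (B / ρ)
  have cutoff_le (y) (hy : y ∈ Icc (-1 : ℝ) 1) :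
      ε ^ 2 * (D.eval y - B / ρ * lorentz c ε y) ≤ (y - c) ^ 2 * D.eval y := by
    have D_le := (le_abs_self _).trans (hD.abs_eval_le hρ hy)
    set u := (y - c) / ε with hu
    rw [show (y - c) ^ 2 = ε ^ 2 * u ^ 2 by rw [hu]; field_simp, mul_assoc]
    have one_sub_le : 1 - lorentz c ε y ≤ u ^ 2 := by
      rw [lorentz, ← hu, sub_le_iff_le_add, ← sub_le_iff_le_add', inv_eq_one_div,
        le_div_iff₀ (by positivity)]
      nlinarith [sq_nonneg (u ^ 2)]
    gcongr
    nlinarith [hD0 y, lorentz_nonneg c ε y]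
  have mass_le : B / ρ * ∫ y in (-1 : ℝ)..1, lorentz c ε y ≤ 1 / 2 := by
    calc B / ρ * ∫ y in (-1 : ℝ)..1, lorentz c ε y ≤ B / ρ * (ε * Real.pi) := by
          gcongr
          exact intervalIntegral_lorentz_le c ε_pos (by norm_num)
      _ = 1 / 2 := by rw [hε]; field_simp
  calc ρ ^ 2 / (8 * Real.pi ^ 2 * B ^ 2) = ε ^ 2 * (1 - 1 / 2) := by
        rw [hε]; field_simp; norm_num
    _ ≤ ε ^ 2 * (1 - B / ρ * ∫ y in (-1 : ℝ)..1, lorentz c ε y) := by gcongr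
    _ = ∫ y in (-1 : ℝ)..1, ε ^ 2 * (D.eval y - B / ρ * lorentz c ε y) := by
        rw [intervalIntegral.integral_const_mul,
          intervalIntegral.integral_sub integrable_D integrable_cutoff,
          intervalIntegral.integral_const_mul, hD.integral_eq_one]
    _ ≤ moment D c 2 :=
        intervalIntegral.integral_mono_on (by norm_num)
          ((integrable_D.sub integrable_cutoff).const_mul _)
          (intervalIntegrable_moment D c 2 _ _) cutoff_le

end IsLocalizedKernel

theorem abs_affine_coeff_le {V m₁ m₂ A Q ρ : ℝ} (hV : 0 < V) (hρ : 0 < ρ) (hA : 0 < A)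
    (hm₂ : m₂ ≤ A * ρ ^ 2) (hV_low : ρ ^ 2 / Q ≤ V) (hQ : 0 < Q) (hVm : V = m₂ - m₁ ^ 2) (x : ℝ) :
    |m₂ / V - m₁ / V * x| ≤ (2 * A + 1) * Q * (1 + |x| / ρ) := by
  have m₁_sq_le : m₁ ^ 2 ≤ A * ρ ^ 2 := by linarith
  have m₂_nonneg : 0 ≤ m₂ := by nlinarith [sq_nonneg m₁]
  have m₁_le : |m₁| ≤ (A + 1) * ρ := abs_le_of_sq_le_sq (by nlinarith [m₁_sq_le]) (by positivity)
  have V_inv_le : V⁻¹ ≤ Q / ρ ^ 2 := by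
    simpa only [inv_div] using inv_anti₀ (by positivity) hV_low
  calc |m₂ / V - m₁ / V * x| ≤ m₂ * V⁻¹ + |m₁| * V⁻¹ * |x| := by
        refine (abs_sub _ _).trans_eq ?_
        rw [abs_mul, abs_div, abs_div, abs_of_pos hV, abs_of_nonneg m₂_nonneg, div_eq_mul_inv,
          div_eq_mul_inv]
    _ ≤ A * ρ ^ 2 * (Q / ρ ^ 2) + (A + 1) * ρ * (Q / ρ ^ 2) * |x| := by gcongr
    _ = A * Q + (A + 1) * Q * (|x| / ρ) := by field_simp
    _ ≤ (2 * A + 1) * Q * (1 + |x| / ρ) := by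
        have : 0 ≤ A * Q * (|x| / ρ) := by positivity
        have : 0 ≤ A * Q := by positivity
        nlinarith

theorem IsLocalizedKernel.centeredKernel {k : ℕ} {B ρ t : ℝ} {D : ℝ[X]}
    (hD : IsLocalizedKernel (k + 4) B ρ t D) (hB : 0 < B) (hρ : 0 < ρ)
    (hD0 : ∀ y, 0 ≤ D.eval y) :
    IsLocalizedKernel (k + 3) ((2 * (Real.pi * B) + 1) * (8 * Real.pi ^ 2 * B ^ 2) * B) ρ t
      (centeredKernel D t) := by
  have variance_ge := hD.le_moment_two hB hρ hD0 (t + moment D t 1)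
  rw [moment_two_about_mean (hD.moment_zero t)] at variance_ge
  have variance_pos : 0 < moment D t 2 - moment D t 1 ^ 2 :=
    lt_of_lt_of_le (by positivity) variance_ge
  refine ⟨?_, fun y hy ↦ ?_⟩
  · simpa [moment] using moment_centeredKernel_zero (hD.moment_zero t) variance_pos
  · have coeff_le := abs_affine_coeff_le variance_pos hρ (by positivity : 0 < Real.pi * B)
      ((hD.mono hρ (by lia)).moment_two_le hB hρ) variance_ge (by positivity) rfl (y - t)
    set u := |y - t| / ρ
    have : 0 ≤ u := by positivity
    have decay := hD.decay y hy
    rw [_root_.centeredKernel, eval_mul, eval_sub, eval_mul, eval_C, eval_C, eval_sub, eval_X,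
      eval_C, abs_mul]
    set Q := (2 * (Real.pi * B) + 1) * (8 * Real.pi ^ 2 * B ^ 2)
    calc _ ≤ |D.eval y| * (Q * (1 + u)) * ρ * (1 + u) ^ (k + 3) := by gcongr
      _ = Q * (|D.eval y| * ρ * (1 + u) ^ (k + 4)) := by ring
      _ ≤ Q * B := by gcongr

end Centering

section TruncatedPower

open Polynomial

theorem exists_derivative_eq (E : ℝ[X]) :
    ∃ F : ℝ[X], F.natDegree ≤ E.natDegree + 1 ∧ derivative F = E := by
  refine ⟨∑ i ∈ Finset.range (E.natDegree + 1), monomial (i + 1) (E.coeff i / (i + 1)),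
    natDegree_sum_le_of_forall_le _ _ fun i hi ↦ ?_, ?_⟩
  · exact (natDegree_monomial_le _).trans (Finset.mem_range.1 hi)
  · conv_rhs => rw [E.as_sum_range]
    rw [derivative_sum]
    refine Finset.sum_congr rfl fun i _ ↦ ?_
    rw [derivative_monomial, Nat.add_sub_cancel, Nat.cast_succ,
      div_mul_cancel₀ _ (Nat.cast_add_one_ne_zero i)]

theorem exists_eval_eq_integral (E : ℝ[X]) (a : ℝ) :
    ∃ F : ℝ[X], F.natDegree ≤ E.natDegree + 1 ∧ ∀ x, F.eval x = ∫ y in a..x, E.eval y := by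
  obtain ⟨F, hF, rfl⟩ := exists_derivative_eq E
  refine ⟨F - C (F.eval a), by rwa [natDegree_sub_C], fun x ↦ ?_⟩
  rw [intervalIntegral.integral_eq_sub_of_hasDerivAt (fun y _ ↦ F.hasDerivAt y)
    (intervalIntegrable_eval _ _ _), eval_sub, eval_C]

theorem exists_eval_eq_integral_sub_mul (E : ℝ[X]) (a : ℝ) :
    ∃ F : ℝ[X], F.natDegree ≤ E.natDegree + 2 ∧
      ∀ x, F.eval x = ∫ y in a..x, (x - y) * E.eval y := by
  obtain ⟨F, hF, eval_F⟩ := exists_eval_eq_integral E a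
  obtain ⟨G, hG, eval_G⟩ := exists_eval_eq_integral (X * E) a
  refine ⟨X * F - G, (natDegree_sub_le _ _).trans (max_le ?_ ?_), fun x ↦ ?_⟩
  · have := natDegree_mul_le (p := X) (q := F)
    rw [natDegree_X] at this
    lia
  · have := natDegree_mul_le (p := X) (q := E)
    rw [natDegree_X] at this
    lia
  · rw [eval_sub, eval_mul, eval_X, eval_F, eval_G, ← intervalIntegral.integral_const_mul,
      ← intervalIntegral.integral_sub ((intervalIntegrable_eval _ _ _).const_mul _)
        (intervalIntegrable_eval _ _ _)]
    simp only [eval_mul, eval_X, sub_mul]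

theorem intervalIntegrable_sub_mul_eval (E : ℝ[X]) (x a b : ℝ) :
    IntervalIntegrable (fun y ↦ (x - y) * E.eval y) volume a b :=
  Continuous.intervalIntegrable (by fun_prop) a b

theorem integral_sub_mul_eval (E : ℝ[X]) (x t : ℝ) :
    ∫ y in (-1 : ℝ)..1, (x - y) * E.eval y = (x - t) * moment E t 0 - moment E t 1 := by
  have expand (y : ℝ) : (x - y) * E.eval y
      = (x - t) * ((y - t) ^ 0 * E.eval y) - (y - t) ^ 1 * E.eval y := by ring
  rw [intervalIntegral.integral_congr fun y _ ↦ expand y,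
    intervalIntegral.integral_sub ((intervalIntegrable_moment E t 0 _ _).const_mul _)
      (intervalIntegrable_moment E t 1 _ _), intervalIntegral.integral_const_mul, moment, moment]

namespace IsLocalizedKernel

variable {k : ℕ} {B ρ t x : ℝ} {E : ℝ[X]}

theorem pow_mul_abs_sub_mul_eval_le (hE : IsLocalizedKernel (k + 3) B ρ t E) (hρ : 0 < ρ) {y : ℝ}
    (hy : y ∈ Icc (-1 : ℝ) 1) (hx : |x - t| ≤ |y - t|) (hxy : |x - y| ≤ |y - t|) :
    (1 + |x - t| / ρ) ^ k * |(x - y) * E.eval y| ≤ B * lorentz t ρ y := by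
  have pow_le : (1 + |x - t| / ρ) ^ k ≤ (1 + |y - t| / ρ) ^ k := by gcongr
  have decay := hE.decay y hy
  set u := |y - t| / ρ with hu
  have : 0 ≤ u := by positivity
  have abs_eq : |y - t| = ρ * u := by rw [hu]; field_simp
  have lorentz_eq : lorentz t ρ y = (1 + u ^ 2)⁻¹ := by
    rw [lorentz, hu, div_pow, div_pow, sq_abs]
  have cube_le : u * (1 + u ^ 2) ≤ (1 + u) ^ 3 := by
    have : 0 ≤ 1 + 2 * u + 3 * u ^ 2 := by positivity
    linarith [show (1 + u) ^ 3 = u * (1 + u ^ 2) + (1 + 2 * u + 3 * u ^ 2) by ring]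
  rw [abs_mul, lorentz_eq, ← div_eq_mul_inv, le_div_iff₀ (by positivity)]
  calc (1 + |x - t| / ρ) ^ k * (|x - y| * |E.eval y|) * (1 + u ^ 2)
      ≤ (1 + u) ^ k * (ρ * u * |E.eval y|) * (1 + u ^ 2) := by
        rw [abs_eq] at hxy
        gcongr
    _ = |E.eval y| * ρ * ((1 + u) ^ k * (u * (1 + u ^ 2))) := by ring
    _ ≤ |E.eval y| * ρ * ((1 + u) ^ k * (1 + u) ^ 3) := by gcongr
    _ = |E.eval y| * ρ * (1 + u) ^ (k + 3) := by ring
    _ ≤ B := decay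

theorem abs_tail_integral_mul_pow_le (hE : IsLocalizedKernel (k + 3) B ρ t E) (hB : 0 < B)
    (hρ : 0 < ρ) {a b : ℝ} (hab : a ≤ b) (hsub : Icc a b ⊆ Icc (-1) 1)
    (hx : ∀ y ∈ Icc a b, |x - t| ≤ |y - t| ∧ |x - y| ≤ |y - t|) :
    |∫ y in a..b, (x - y) * E.eval y| * (1 + |x - t| / ρ) ^ k ≤ B * Real.pi * ρ := by
  calc |∫ y in a..b, (x - y) * E.eval y| * (1 + |x - t| / ρ) ^ k
      = ‖∫ y in a..b, (1 + |x - t| / ρ) ^ k * ((x - y) * E.eval y)‖ := by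
        rw [intervalIntegral.integral_const_mul, norm_mul, Real.norm_eq_abs, Real.norm_eq_abs,
          abs_of_nonneg (by positivity : 0 ≤ (1 + |x - t| / ρ) ^ k), mul_comm]
    _ ≤ ∫ y in a..b, B * lorentz t ρ y := by
        refine intervalIntegral.norm_integral_le_of_norm_le hab (Eventually.of_forall fun y hy ↦ ?_)
          ((intervalIntegrable_lorentz t hρ a b).const_mul B)
        have hy' := Ioc_subset_Icc_self hy
        rw [norm_mul, Real.norm_eq_abs, Real.norm_eq_abs, abs_of_nonneg (by positivity)]
        exact hE.pow_mul_abs_sub_mul_eval_le hρ (hsub hy') (hx y hy').1 (hx y hy').2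
    _ = B * ∫ y in a..b, lorentz t ρ y := intervalIntegral.integral_const_mul _ _
    _ ≤ B * (ρ * Real.pi) := by
        gcongr
        exact intervalIntegral_lorentz_le t hρ hab
    _ = B * Real.pi * ρ := by ring

/- `P` is the second antiderivative of the kernel; its error at `x` is an integral over the part of
`[-1, 1]` lying beyond `x` as seen from `t`. -/
theorem exists_truncatedPower_approx (hE : IsLocalizedKernel (k + 3) B ρ t E) (hB : 0 < B)
    (hρ : 0 < ρ) (hmean : moment E t 1 = 0) :
    ∃ P : ℝ[X], P.natDegree ≤ E.natDegree + 2 ∧ ∀ x ∈ Icc (-1 : ℝ) 1,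
      |max (x - t) 0 - P.eval x| * (1 + |x - t| / ρ) ^ k ≤ B * Real.pi * ρ := by
  obtain ⟨P, hP, eval_P⟩ := exists_eval_eq_integral_sub_mul E (-1)
  refine ⟨P, hP, fun x hx ↦ ?_⟩
  rcases le_total x t with hxt | htx
  · rw [max_eq_right (by linarith), zero_sub, abs_neg, eval_P]
    refine hE.abs_tail_integral_mul_pow_le hB hρ hx.1 (Icc_subset_Icc le_rfl hx.2) fun y hy ↦ ?_
    rw [abs_of_nonpos (by linarith : x - t ≤ 0), abs_of_nonpos (by linarith [hy.2] : y - t ≤ 0),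
      abs_of_nonneg (by linarith [hy.2] : 0 ≤ x - y)]
    constructor <;> linarith [hy.1, hy.2]
  · have tail_eq : x - t - P.eval x = ∫ y in x..1, (x - y) * E.eval y := by
      have total := integral_sub_mul_eval E x t
      rw [hE.moment_zero, hmean, mul_one, sub_zero] at total
      rw [eval_P, ← total, ← intervalIntegral.integral_add_adjacent_intervals
        (intervalIntegrable_sub_mul_eval E x (-1) x) (intervalIntegrable_sub_mul_eval E x x 1),
        add_sub_cancel_left]
    rw [max_eq_left (by linarith), tail_eq]
    refine hE.abs_tail_integral_mul_pow_le hB hρ hx.2 (Icc_subset_Icc hx.1 le_rfl) fun y hy ↦ ?_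
    rw [abs_of_nonneg (by linarith : 0 ≤ x - t), abs_of_nonneg (by linarith [hy.1] : 0 ≤ y - t),
      abs_of_nonpos (by linarith [hy.1] : x - y ≤ 0)]
    constructor <;> linarith [hy.1, hy.2]

end IsLocalizedKernel

theorem exists_truncatedPower_approx (k : ℕ) :
    ∃ A > (0 : ℝ), ∀ N : ℕ, 1 ≤ N → ∀ t ∈ Ioo (-1 : ℝ) 1, 8 / N ≤ phiW t →
      ∃ P : ℝ[X], P.natDegree ≤ 2 * (k + 2) * (N - 1) + 3 ∧ ∀ x ∈ Icc (-1 : ℝ) 1,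
        |max (x - t) 0 - P.eval x| * (1 + |x - t| / localScale N t) ^ (2 * k)
          ≤ A * localScale N t := by
  set B : ℝ := 4 * 48 ^ (2 * (k + 2))
  have hB : 0 < B := by positivity
  set B' : ℝ := (2 * (Real.pi * B) + 1) * (8 * Real.pi ^ 2 * B ^ 2) * B
  refine ⟨B' * Real.pi, by positivity, fun N hN t ht hφ ↦ ?_⟩
  have hρ := localScale_pos hN ht
  obtain ⟨D, deg_D, D_nonneg, hD⟩ := exists_nonneg_isLocalizedKernel (k + 2) hN ht hφ
  obtain ⟨P, deg_P, hP⟩ := (IsLocalizedKernel.centeredKernel (k := 2 * k) hD hB hρ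
    D_nonneg).exists_truncatedPower_approx (by positivity) hρ (moment_centeredKernel_one D t)
  have := natDegree_centeredKernel_le D t
  exact ⟨P, by lia, hP⟩

end TruncatedPower

section BestApproximation

open Polynomial

theorem LpOn_one_le_of_forall_abs_le {g h : ℝ → ℝ} {a b : ℝ} (hab : a ≤ b)
    (hh : IntervalIntegrable h volume a b) (hgh : ∀ x ∈ Ioo a b, |g x| ≤ h x) :
    LpOn g 1 a b ≤ ENNReal.ofReal (∫ x in a..b, h x) := by
  rw [intervalIntegral.integral_of_le hab, integral_Ioc_eq_integral_Ioo,
    ofReal_integral_eq_lintegral_ofReal, LpOn, eLpNorm_one_eq_lintegral_enorm,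
    ← Measure.restrict_congr_set Ioo_ae_eq_Icc]
  · refine setLIntegral_mono' measurableSet_Ioo fun x hx ↦ ?_
    rw [Real.enorm_eq_ofReal_abs]
    exact ENNReal.ofReal_le_ofReal (hgh x hx)
  · exact (intervalIntegrable_iff_integrableOn_Ioo_of_le hab).1 hh
  · exact (ae_restrict_iff' measurableSet_Ioo).2
      (Eventually.of_forall fun x hx ↦ (abs_nonneg _).trans (hgh x hx))

theorem LpOn_one_le_of_abs_le {g : ℝ → ℝ} {a b C : ℝ} (hab : a ≤ b)
    (hg : ∀ x ∈ Ioo a b, |g x| ≤ C) : LpOn g 1 a b ≤ ENNReal.ofReal ((b - a) * C) := by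
  simpa using LpOn_one_le_of_forall_abs_le hab intervalIntegrable_const hg

theorem LpOn_one_le_add (g : ℝ → ℝ) (a b c : ℝ) : LpOn g 1 a c ≤ LpOn g 1 a b + LpOn g 1 b c := by
  simp only [LpOn, eLpNorm_one_eq_lintegral_enorm]
  exact (lintegral_mono_set Icc_subset_Icc_union_Icc).trans (lintegral_union_le _ _ _)

theorem ofReal_integral_abs_le_LpOn_one {g : ℝ → ℝ} {a b c d : ℝ} (hg : Continuous g)
    (hcd : c ≤ d) (hsub : Icc c d ⊆ Icc a b) :
    ENNReal.ofReal (∫ x in c..d, |g x|) ≤ LpOn g 1 a b := by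
  rw [intervalIntegral.integral_of_le hcd, ← integral_Icc_eq_integral_Ioc,
    ofReal_integral_eq_lintegral_ofReal, LpOn, eLpNorm_one_eq_lintegral_enorm]
  · refine (lintegral_mono_set hsub).trans' (lintegral_mono fun x ↦ ?_)
    rw [Real.enorm_eq_ofReal_abs]
  · exact hg.abs.integrableOn_Icc
  · exact Eventually.of_forall fun x ↦ abs_nonneg _

variable {n : ℕ} {wt f g : ℝ → ℝ} {q : ℝ≥0∞}

theorem En_le_LpOn {P : ℝ[X]} (hP : P.natDegree ≤ n) :
    En n f wt q ≤ LpOn (fun x ↦ wt x * (f x - P.eval x)) q (-1) 1 :=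
  iInf₂_le P hP

theorem En_anti {m : ℕ} (hmn : m ≤ n) : En n f wt q ≤ En m f wt q :=
  le_iInf₂ fun _ hP ↦ En_le_LpOn (le_trans hP hmn)

theorem En_le_LpOn_mul : En n f wt q ≤ LpOn (fun x ↦ wt x * f x) q (-1) 1 := by
  simpa only [eval_zero, sub_zero] using En_le_LpOn (f := f) (wt := wt) (q := q)
    (P := 0) (n := n) (by simp)

theorem En_eval {P : ℝ[X]} (hP : P.natDegree ≤ n) : En n (fun x ↦ P.eval x) wt q = 0 :=
  le_antisymm ((En_le_LpOn hP).trans (by simp [LpOn])) zero_le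

theorem En_add_le (hq : 1 ≤ q) (hwt : Measurable wt) (hf : Measurable f) (hg : Measurable g) :
    En n (fun x ↦ f x + g x) wt q ≤ En n f wt q + En n g wt q := by
  have triangle (P Q : ℝ[X]) : LpOn (fun x ↦ wt x * (f x + g x - (P + Q).eval x)) q (-1) 1
      ≤ LpOn (fun x ↦ wt x * (f x - P.eval x)) q (-1) 1
        + LpOn (fun x ↦ wt x * (g x - Q.eval x)) q (-1) 1 := by
    refine le_of_eq_of_le (congrArg (LpOn · q (-1) 1) (funext fun x ↦ ?_))
      (eLpNorm_add_le (hwt.mul (hf.sub P.continuous.measurable)).aestronglyMeasurable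
        (hwt.mul (hg.sub Q.continuous.measurable)).aestronglyMeasurable hq)
    simp only [eval_add, Pi.add_apply]
    ring
  simp only [En, ENNReal.iInf_add, ENNReal.add_iInf]
  exact le_iInf₂ fun Q hQ ↦ le_iInf₂ fun P hP ↦ (En_le_LpOn
    ((natDegree_add_le P Q).trans (max_le hP hQ))).trans (triangle P Q)

theorem En_const_mul_le (c : ℝ) : En n (fun x ↦ c * f x) wt q ≤ ‖c‖ₑ * En n f wt q := by
  rcases eq_or_ne c 0 with rfl | hc
  · simpa using (En_eval (P := 0) (n := n) (wt := wt) (q := q) (by simp)).le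
  have homogeneous (P : ℝ[X]) : LpOn (fun x ↦ wt x * (c * f x - (C c * P).eval x)) q (-1) 1
      = ‖c‖ₑ * LpOn (fun x ↦ wt x * (f x - P.eval x)) q (-1) 1 := by
    rw [LpOn, LpOn, ← eLpNorm_const_smul]
    congr 1
    ext x
    simp only [eval_mul, eval_C, Pi.smul_apply, smul_eq_mul]
    ring
  simp only [En, ENNReal.mul_iInf_of_ne (enorm_ne_zero.2 hc) enorm_ne_top, ← homogeneous]
  exact le_iInf₂ fun P hP ↦ En_le_LpOn ((natDegree_C_mul_le c P).trans hP)

theorem En_sum_le {ι : Type*} (s : Finset ι) {F : ι → ℝ → ℝ} (hq : 1 ≤ q) (hwt : Measurable wt)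
    (hF : ∀ i ∈ s, Measurable (F i)) :
    En n (fun x ↦ ∑ i ∈ s, F i x) wt q ≤ ∑ i ∈ s, En n (F i) wt q := by
  classical
  induction s using Finset.induction_on with
  | empty => simpa using (En_eval (P := 0) (n := n) (wt := wt) (q := q) (by simp)).le
  | insert i s hi ih =>
    simp only [Finset.sum_insert hi]
    have hF' := fun j hj ↦ hF j (Finset.mem_insert_of_mem hj)
    exact (En_add_le hq hwt (hF i (Finset.mem_insert_self i s))
      (Finset.measurable_fun_sum s hF')).trans (by gcongr; exact ih hF')

end BestApproximation

section JacobiWeight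

variable {α β x y : ℝ}

theorem jacobi_nonneg (hx : x ∈ Icc (-1 : ℝ) 1) : 0 ≤ jacobi α β x :=
  mul_nonneg (Real.rpow_nonneg (by linarith [hx.1]) _) (Real.rpow_nonneg (by linarith [hx.2]) _)

theorem jacobi_pos (hx : x ∈ Ioo (-1 : ℝ) 1) : 0 < jacobi α β x :=
  mul_pos (Real.rpow_pos_of_pos (by linarith [hx.1]) _)
    (Real.rpow_pos_of_pos (by linarith [hx.2]) _)

theorem continuous_jacobi (hα : 0 ≤ α) (hβ : 0 ≤ β) : Continuous (jacobi α β) :=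
  ((continuous_const.add continuous_id).rpow_const fun _ ↦ Or.inr hα).mul
    ((continuous_const.sub continuous_id).rpow_const fun _ ↦ Or.inr hβ)

theorem jacobi_zero : jacobi α β 0 = 1 := by simp [jacobi]

theorem jacobi_neg (α β x : ℝ) : jacobi α β (-x) = jacobi β α x := by
  simp only [jacobi, sub_neg_eq_add, ← sub_eq_add_neg, mul_comm]

theorem jacobi_succ (hx : x ∈ Ioo (-1 : ℝ) 1) :
    jacobi (α + 1) (β + 1) x = jacobi α β x * ((1 + x) * (1 - x)) := by
  rw [jacobi, jacobi, Real.rpow_add_one (by linarith [hx.1]),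
    Real.rpow_add_one (by linarith [hx.2])]
  ring

theorem jacobi_le_rpow_mul {c : ℝ} (hα : 0 ≤ α) (hβ : 0 ≤ β) (hc : 0 < c)
    (hx : x ∈ Icc (-1 : ℝ) 1) (hy : y ∈ Icc (-1 : ℝ) 1) (hleft : 1 + x ≤ c * (1 + y))
    (hright : 1 - x ≤ c * (1 - y)) : jacobi α β x ≤ c ^ (α + β) * jacobi α β y := by
  obtain ⟨⟨_, _⟩, ⟨_, _⟩⟩ := hx, hy
  calc jacobi α β x ≤ (c * (1 + y)) ^ α * (c * (1 - y)) ^ β :=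
        mul_le_mul (Real.rpow_le_rpow (by linarith) hleft hα)
          (Real.rpow_le_rpow (by linarith) hright hβ) (Real.rpow_nonneg (by linarith) _)
          (Real.rpow_nonneg (by nlinarith) _)
    _ = c ^ (α + β) * jacobi α β y := by
        rw [Real.mul_rpow hc.le (by linarith), Real.mul_rpow hc.le (by linarith),
          Real.rpow_add hc, jacobi]
        ring

theorem jacobi_le_two_rpow (hα : 0 ≤ α) (hβ : 0 ≤ β) (hx : x ∈ Icc (-1 : ℝ) 1) :
    jacobi α β x ≤ 2 ^ (α + β) := by
  simpa [jacobi_zero] using jacobi_le_rpow_mul hα hβ zero_lt_two hx (y := 0) (by simp)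
    (by linarith [hx.2]) (by linarith [hx.1])

end JacobiWeight

section WeightedTruncatedPower

open Polynomial

variable {α β : ℝ}

theorem localScale_sq {N : ℕ} {t : ℝ} (ht : t ∈ Icc (-1 : ℝ) 1) :
    localScale N t ^ 2 = (1 + t) * (1 - t) / N ^ 2 := by
  rw [localScale, div_pow, phiW_sq ht]

theorem eight_div_le_phiW {N : ℕ} {t : ℝ} (ht : 64 / (N : ℝ) ^ 2 ≤ 1 - |t|) :
    8 / N ≤ phiW t := by
  refine Real.le_sqrt_of_sq_le ?_
  have : 0 ≤ 64 / (N : ℝ) ^ 2 := by positivity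
  calc (8 / N : ℝ) ^ 2 = 64 / N ^ 2 := by rw [div_pow]; norm_num
    _ ≤ 1 - |t| := ht
    _ ≤ 1 - t ^ 2 := by rw [← sq_abs t]; nlinarith [abs_nonneg t]

theorem localScale_le {N : ℕ} {t : ℝ} (ht : t ∈ Icc (-1 : ℝ) 1) (hφ : 8 / N ≤ phiW t) :
    localScale N t ≤ (1 + t) * (1 - t) / 8 := by
  have : 0 ≤ phiW t := Real.sqrt_nonneg _
  calc localScale N t = 8 / N * phiW t / 8 := by rw [localScale]; ring
    _ ≤ phiW t * phiW t / 8 := by gcongr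
    _ = (1 + t) * (1 - t) / 8 := by rw [← sq, phiW_sq ht]

theorem jacobi_le_mul_one_add_abs_div_pow {k : ℕ} {ρ t x : ℝ} (hα : 0 ≤ α) (hβ : 0 ≤ β)
    (hk : α + β ≤ k) (ht : t ∈ Ioo (-1 : ℝ) 1) (hρ : 0 < ρ) (hρt : ρ ≤ (1 + t) * (1 - t) / 8)
    (hx : x ∈ Icc (-1 : ℝ) 1) :
    jacobi α β x ≤ jacobi α β t * (1 + |x - t| / ρ) ^ k := by
  obtain ⟨_, _⟩ := ht
  have u_nonneg : 0 ≤ |x - t| / ρ := by positivity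
  have abs_eq : |x - t| = ρ * (|x - t| / ρ) := by field_simp
  set u := |x - t| / ρ
  have step_left : ρ * u ≤ (1 + t) * u := by gcongr; nlinarith
  have step_right : ρ * u ≤ (1 - t) * u := by gcongr; nlinarith
  have hleft : 1 + x ≤ (1 + u) * (1 + t) := by linarith [le_abs_self (x - t)]
  have hright : 1 - x ≤ (1 + u) * (1 - t) := by linarith [neg_abs_le (x - t)]
  have ht' : t ∈ Icc (-1 : ℝ) 1 := ⟨by linarith, by linarith⟩
  calc jacobi α β x ≤ (1 + u) ^ (α + β) * jacobi α β t :=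
        jacobi_le_rpow_mul hα hβ (by linarith) hx ht' hleft hright
    _ ≤ (1 + u) ^ (k : ℝ) * jacobi α β t := by
        gcongr
        · exact jacobi_nonneg ht'
        · linarith
    _ = jacobi α β t * (1 + u) ^ k := by rw [Real.rpow_natCast, mul_comm]

theorem exists_weighted_truncatedPower_approx (hα : 0 ≤ α) (hβ : 0 ≤ β) :
    ∃ A > (0 : ℝ), ∃ r : ℕ, 2 ≤ r ∧ ∀ N : ℕ, 1 ≤ N → ∀ t ∈ Ioo (-1 : ℝ) 1, 8 / N ≤ phiW t →
      ∃ P : ℝ[X], P.natDegree ≤ 2 * r * (N - 1) + 3 ∧ ∀ x ∈ Icc (-1 : ℝ) 1,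
        |jacobi α β x * (max (x - t) 0 - P.eval x)|
          ≤ A * jacobi α β t * localScale N t * lorentz t (localScale N t) x := by
  obtain ⟨k, hk⟩ := exists_nat_ge (α + β)
  obtain ⟨A, hA, approx⟩ := exists_truncatedPower_approx (k + 1)
  refine ⟨A, hA, k + 3, by lia, fun N hN t ht hφ ↦ ?_⟩
  obtain ⟨P, deg_P, hP⟩ := approx N hN t ht hφ
  refine ⟨P, deg_P, fun x hx ↦ ?_⟩
  have hρ := localScale_pos hN ht
  have error_le := hP x hx
  have weight_le := jacobi_le_mul_one_add_abs_div_pow hα hβ hk ht hρ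
    (localScale_le (Ioo_subset_Icc_self ht) hφ) hx
  have weight_nonneg : 0 ≤ jacobi α β x := jacobi_nonneg hx
  have weight_t_nonneg : 0 ≤ jacobi α β t := (jacobi_pos ht).le
  set ρ := localScale N t
  set u := |x - t| / ρ with hu
  have u_nonneg : 0 ≤ u := by positivity
  have lorentz_eq : lorentz t ρ x = (1 + u ^ 2)⁻¹ := by
    rw [lorentz, hu, div_pow, div_pow, sq_abs]
  have sq_le : 1 + u ^ 2 ≤ (1 + u) ^ (k + 2) :=
    (by nlinarith : 1 + u ^ 2 ≤ (1 + u) ^ 2).trans (pow_le_pow_right₀ (by linarith) (by lia))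
  rw [lorentz_eq, ← div_eq_mul_inv, le_div_iff₀ (by positivity), abs_mul,
    abs_of_nonneg weight_nonneg]
  calc jacobi α β x * |max (x - t) 0 - P.eval x| * (1 + u ^ 2)
      ≤ jacobi α β t * (1 + u) ^ k * |max (x - t) 0 - P.eval x| * (1 + u) ^ (k + 2) := by gcongr
    _ = jacobi α β t * (|max (x - t) 0 - P.eval x| * (1 + u) ^ (2 * (k + 1))) := by ring
    _ ≤ jacobi α β t * (A * ρ) := by gcongr
    _ = A * jacobi α β t * ρ := by ring

theorem exists_En_truncatedPower_le_of_degree (hα : 0 ≤ α) (hβ : 0 ≤ β) :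
    ∃ A > (0 : ℝ), ∃ r : ℕ, 2 ≤ r ∧ ∀ N : ℕ, 1 ≤ N → ∀ t : ℝ, 64 / (N : ℝ) ^ 2 ≤ 1 - |t| →
      En (2 * r * (N - 1) + 3) (fun x ↦ max (x - t) 0) (jacobi α β) 1
        ≤ ENNReal.ofReal (A * jacobi (α + 1) (β + 1) t / N ^ 2) := by
  obtain ⟨A, hA, r, hr, approx⟩ := exists_weighted_truncatedPower_approx hα hβ
  refine ⟨A * Real.pi, by positivity, r, hr, fun N hN t htN ↦ ?_⟩
  have : (0 : ℝ) < N := by exact_mod_cast hN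
  have ht : t ∈ Ioo (-1 : ℝ) 1 := abs_lt.1 (by linarith [show 0 < 64 / (N : ℝ) ^ 2 by positivity])
  obtain ⟨P, deg_P, hP⟩ := approx N hN t ht (eight_div_le_phiW htN)
  have hρ := localScale_pos hN ht
  have weight_pos : 0 < jacobi α β t := jacobi_pos ht
  refine (En_le_LpOn deg_P).trans ((LpOn_one_le_of_forall_abs_le (by norm_num)
    ((intervalIntegrable_lorentz t hρ _ _).const_mul _)
    fun x hx ↦ hP x (Ioo_subset_Icc_self hx)).trans (ENNReal.ofReal_le_ofReal ?_))
  calc ∫ x in (-1 : ℝ)..1, A * jacobi α β t * localScale N t * lorentz t (localScale N t) x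
      = A * jacobi α β t * localScale N t * ∫ x in (-1 : ℝ)..1, lorentz t (localScale N t) x :=
        intervalIntegral.integral_const_mul _ _
    _ ≤ A * jacobi α β t * localScale N t * (localScale N t * Real.pi) := by
        gcongr
        exact intervalIntegral_lorentz_le t hρ (by norm_num)
    _ = A * Real.pi * jacobi α β t * localScale N t ^ 2 := by ring
    _ = A * Real.pi * jacobi (α + 1) (β + 1) t / N ^ 2 := by
        rw [localScale_sq (Ioo_subset_Icc_self ht), jacobi_succ ht]
        ring

theorem exists_nat_le_of_two_mul_le {r n : ℕ} (hr : 2 ≤ r) (hn : 2 * r ≤ n) :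
    ∃ N : ℕ, 1 ≤ N ∧ n ≤ 4 * r * N ∧ 2 * r * (N - 1) + 3 ≤ n := by
  have N_pos : 1 ≤ n / (2 * r) := Nat.div_pos hn (by lia)
  have lt_succ := Nat.lt_mul_div_succ n (by lia : 0 < 2 * r)
  have mul_le := Nat.mul_div_le n (2 * r)
  refine ⟨n / (2 * r), N_pos, by nlinarith, ?_⟩
  obtain ⟨M, hM⟩ := Nat.exists_eq_add_of_le' N_pos
  rw [hM] at mul_le ⊢
  rw [Nat.add_sub_cancel]
  nlinarith

theorem exists_En_truncatedPower_le (hα : 0 ≤ α) (hβ : 0 ≤ β) :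
    ∃ A > (0 : ℝ), ∃ κ ≥ (2 : ℝ), ∀ n : ℕ, 1 ≤ n → ∀ t : ℝ, κ / n ^ 2 ≤ 1 - |t| →
      En n (fun x ↦ max (x - t) 0) (jacobi α β) 1
        ≤ ENNReal.ofReal (A * jacobi (α + 1) (β + 1) t / n ^ 2) := by
  obtain ⟨A, hA, r, hr, bound⟩ := exists_En_truncatedPower_le_of_degree hα hβ
  have hr' : (2 : ℝ) ≤ r := by exact_mod_cast hr
  refine ⟨A * (4 * r) ^ 2, by positivity, 1024 * (r : ℝ) ^ 2, by nlinarith, fun n hn t ht ↦ ?_⟩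
  have hn' : (0 : ℝ) < n := by exact_mod_cast hn
  have n_large : 2 * r ≤ n := by
    have : 1024 * (r : ℝ) ^ 2 ≤ n ^ 2 := by
      rw [← div_le_one (by positivity)]
      linarith [abs_nonneg t]
    exact_mod_cast (by nlinarith : 2 * (r : ℝ) ≤ n)
  obtain ⟨N, N_pos, n_le, deg_le⟩ := exists_nat_le_of_two_mul_le hr n_large
  have n_le' : (n : ℝ) ≤ 4 * r * N := by exact_mod_cast n_le
  have : (0 : ℝ) < N := by exact_mod_cast N_pos
  have ht_N : 64 / (N : ℝ) ^ 2 ≤ 1 - |t| := by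
    refine le_trans ?_ ht
    rw [div_le_div_iff₀ (by positivity) (by positivity)]
    nlinarith [pow_le_pow_left₀ hn'.le n_le' 2]
  refine (En_anti deg_le).trans ((bound N N_pos t ht_N).trans (ENNReal.ofReal_le_ofReal ?_))
  have weight_nonneg : 0 ≤ jacobi (α + 1) (β + 1) t :=
    jacobi_nonneg (abs_le.1 (by linarith [show 0 ≤ 64 / (N : ℝ) ^ 2 by positivity]))
  rw [div_le_div_iff₀ (by positivity) (by positivity)]
  calc A * jacobi (α + 1) (β + 1) t * n ^ 2
      ≤ A * jacobi (α + 1) (β + 1) t * (4 * r * N) ^ 2 := by gcongr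
    _ = A * (4 * r) ^ 2 * jacobi (α + 1) (β + 1) t * N ^ 2 := by ring

end WeightedTruncatedPower

section ConvexClass

theorem sum_div_prod_erase_fin_three (f : ℝ → ℝ) {x : Fin 3 → ℝ} (hx : Function.Injective x) :
    ∑ i, f (x i) / ∏ j ∈ Finset.univ.erase i, (x i - x j)
      = (slope f (x 1) (x 2) - slope f (x 1) (x 0)) / (x 2 - x 0) := by
  have h₀₁ : x 0 - x 1 ≠ 0 := sub_ne_zero.2 (hx.ne (by decide))
  have h₀₂ : x 0 - x 2 ≠ 0 := sub_ne_zero.2 (hx.ne (by decide))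
  have h₁₂ : x 1 - x 2 ≠ 0 := sub_ne_zero.2 (hx.ne (by decide))
  rw [Fin.sum_univ_three, show (Finset.univ : Finset (Fin 3)).erase 0 = {1, 2} by decide,
    show (Finset.univ : Finset (Fin 3)).erase 1 = {0, 2} by decide,
    show (Finset.univ : Finset (Fin 3)).erase 2 = {0, 1} by decide,
    Finset.prod_pair (by decide), Finset.prod_pair (by decide), Finset.prod_pair (by decide),
    slope_def_field, slope_def_field, ← neg_sub (x 0) (x 1), ← neg_sub (x 0) (x 2),
    ← neg_sub (x 1) (x 2)]
  field_simp
  ring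

theorem kMonotoneOn_two_iff_convexOn {f : ℝ → ℝ} :
    kMonotoneOn 2 f ↔ ConvexOn ℝ (Ioo (-1 : ℝ) 1) f := by
  constructor
  · intro hf
    refine convexOn_of_slope_mono_adjacent (convex_Ioo _ _) fun {x y z} hx hz hxy hyz ↦ ?_
    have strictMono : StrictMono ![x, y, z] := by
      rw [Fin.strictMono_iff_lt_succ]
      intro i
      fin_cases i <;> simpa
    have mem (i : Fin 3) : ![x, y, z] i ∈ Ioo (-1 : ℝ) 1 := by
      fin_cases i
      exacts [hx, ⟨hx.1.trans hxy, hyz.trans hz.2⟩, hz]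
    have nonneg := hf _ strictMono.injective mem
    rw [sum_div_prod_erase_fin_three f strictMono.injective] at nonneg
    rw [← slope_def_field, ← slope_def_field, slope_comm f x y]
    simpa [le_div_iff₀ (sub_pos.2 (hxy.trans hyz))] using nonneg
  · intro hf x x_inj hx
    have mono := hf.slope_mono (hx 1)
    have mem_left : x 0 ∈ Ioo (-1 : ℝ) 1 \ {x 1} := ⟨hx 0, x_inj.ne (by decide)⟩
    have mem_right : x 2 ∈ Ioo (-1 : ℝ) 1 \ {x 1} := ⟨hx 2, x_inj.ne (by decide)⟩
    rw [sum_div_prod_erase_fin_three f x_inj]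
    rcases le_total (x 0) (x 2) with h | h
    · exact div_nonneg (sub_nonneg.2 (mono mem_left mem_right h)) (sub_nonneg.2 h)
    · exact div_nonneg_of_nonpos (sub_nonpos.2 (mono mem_right mem_left h)) (sub_nonpos.2 h)

theorem le_of_ae_restrict_le_of_continuousOn {U : Set ℝ} {g : ℝ → ℝ} {C : ℝ} (hU : IsOpen U)
    (hg : ContinuousOn g U) (hle : ∀ᵐ x ∂volume.restrict U, g x ≤ C) : ∀ x ∈ U, g x ≤ C := by
  have : EqOn (fun x ↦ max (g x) C) (fun _ ↦ C) U :=
    Measure.eqOn_open_of_ae_eq (hle.mono fun x hx ↦ max_eq_right hx) hU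
      (hg.sup continuousOn_const) continuousOn_const
  exact fun x hx ↦ max_eq_right_iff.1 (this hx)

/-- The pointwise form of membership in `M² ∩ B_∞^{α,β}`, with the norm only bounded by `1`:
`f` is convex on `(-1,1)` and `w_{α,β} |f| ≤ 1` there. -/
structure IsBoundedConvex (α β : ℝ) (f : ℝ → ℝ) : Prop where
  convexOn : ConvexOn ℝ (Ioo (-1 : ℝ) 1) f
  jacobi_mul_abs_le : ∀ x ∈ Ioo (-1 : ℝ) 1, jacobi α β x * |f x| ≤ 1

variable {α β : ℝ} {f : ℝ → ℝ}

theorem isBoundedConvex_of_mem (hα : 0 ≤ α) (hβ : 0 ≤ β) (hf : f ∈ MSet 2 ∩ BSet ∞ α β) :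
    IsBoundedConvex α β f := by
  obtain ⟨f_mono, -, norm_eq⟩ := hf
  have f_convex := kMonotoneOn_two_iff_convexOn.1 f_mono
  refine ⟨f_convex, le_of_ae_restrict_le_of_continuousOn isOpen_Ioo
    ((continuous_jacobi hα hβ).continuousOn.mul (f_convex.continuousOn isOpen_Ioo).abs) ?_⟩
  have ae_le : ∀ᵐ x ∂volume.restrict (Icc (-1 : ℝ) 1), ‖jacobi α β x * f x‖ₑ ≤ 1 := by
    rw [LpOn, eLpNorm_exponent_top] at norm_eq
    exact norm_eq ▸ enorm_ae_le_eLpNormEssSup _ _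
  filter_upwards [ae_restrict_of_ae_restrict_of_subset Ioo_subset_Icc_self ae_le,
    ae_restrict_mem measurableSet_Ioo] with x hx hxI
  rwa [Real.enorm_eq_ofReal_abs, ENNReal.ofReal_le_one, abs_mul, abs_of_pos (jacobi_pos hxI)] at hx

theorem neg_mem_Ioo_neg_one_one {x : ℝ} (hx : x ∈ Ioo (-1 : ℝ) 1) : -x ∈ Ioo (-1 : ℝ) 1 :=
  ⟨neg_lt_neg hx.2, neg_lt.2 hx.1⟩

namespace IsBoundedConvex

theorem comp_neg (hf : IsBoundedConvex α β f) : IsBoundedConvex β α fun x ↦ f (-x) where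
  convexOn := by
    have preimage_eq : (-LinearMap.id : ℝ →ₗ[ℝ] ℝ) ⁻¹' Ioo (-1) 1 = Ioo (-1 : ℝ) 1 := by
      ext x
      simp [and_comm, neg_lt]
    exact preimage_eq ▸ hf.convexOn.comp_linearMap (-LinearMap.id)
  jacobi_mul_abs_le x hx := by
    rw [← jacobi_neg]
    exact hf.jacobi_mul_abs_le (-x) (neg_mem_Ioo_neg_one_one hx)

variable {x y : ℝ}

theorem jacobi_mul_abs_le_of_le {c : ℝ} (hf : IsBoundedConvex α β f) (hc : 0 ≤ c)
    (hy : y ∈ Ioo (-1 : ℝ) 1) (hxy : jacobi α β x ≤ c * jacobi α β y) :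
    jacobi α β x * |f y| ≤ c := by
  calc jacobi α β x * |f y| ≤ c * jacobi α β y * |f y| := by gcongr
    _ = c * (jacobi α β y * |f y|) := mul_assoc _ _ _
    _ ≤ c := mul_le_of_le_one_right hc (hf.jacobi_mul_abs_le y hy)

/- By convexity the chord over `[x, y]` is no steeper than the one from `y` to the midpoint of
`[y, 1]`, where the weight is still comparable to its value at `y`. -/
theorem slope_mul_jacobi_le (hf : IsBoundedConvex α β f) (hα : 0 ≤ α) (hβ : 0 ≤ β)
    (hx : x ∈ Ioo (-1 : ℝ) 1) (hy : y ∈ Ioo (-1 : ℝ) 1) (hxy : x < y) :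
    slope f x y * jacobi (α + 1) (β + 1) y ≤ 4 * (1 + 2 ^ (α + β)) := by
  set z := (1 + y) / 2 with hz_def
  have hz : z ∈ Ioo (-1 : ℝ) 1 := ⟨by linarith [hy.1], by linarith [hy.2]⟩
  have hyz : y < z := by linarith [hy.2]
  have slope_le : slope f x y ≤ (f z - f y) / (z - y) :=
    (slope_def_field f x y).trans_le (hf.convexOn.slope_mono_adjacent hx hz hxy hyz)
  have weight_pos : 0 < jacobi α β y := jacobi_pos hy
  have weight_le : jacobi α β y ≤ 2 ^ (α + β) * jacobi α β z :=
    jacobi_le_rpow_mul hα hβ zero_lt_two (Ioo_subset_Icc_self hy) (Ioo_subset_Icc_self hz)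
      (by linarith [hy.1]) (by linarith)
  have at_z : jacobi α β y * f z ≤ 2 ^ (α + β) :=
    (mul_le_mul_of_nonneg_left (le_abs_self _) weight_pos.le).trans
      (hf.jacobi_mul_abs_le_of_le (by positivity) hz weight_le)
  have at_y : -1 ≤ jacobi α β y * f y := by
    nlinarith [neg_abs_le (f y), hf.jacobi_mul_abs_le y hy]
  have hy_left : 0 < 1 + y := by linarith [hy.1]
  have hy_right : 0 < 1 - y := by linarith [hy.2]
  rw [jacobi_succ hy]
  calc slope f x y * (jacobi α β y * ((1 + y) * (1 - y)))
      ≤ (f z - f y) / (z - y) * (jacobi α β y * ((1 + y) * (1 - y))) := by gcongr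
    _ = 2 * (1 + y) * (jacobi α β y * f z - jacobi α β y * f y) := by
        rw [show z - y = (1 - y) / 2 by rw [hz_def]; ring]
        field_simp
    _ ≤ 2 * (1 + y) * (1 + 2 ^ (α + β)) := by
        gcongr
        linarith
    _ ≤ 2 * 2 * (1 + 2 ^ (α + β)) := by
        gcongr
        linarith
    _ = 4 * (1 + 2 ^ (α + β)) := by ring

theorem neg_le_slope_mul_jacobi (hf : IsBoundedConvex α β f) (hα : 0 ≤ α) (hβ : 0 ≤ β)
    (hx : x ∈ Ioo (-1 : ℝ) 1) (hy : y ∈ Ioo (-1 : ℝ) 1) (hxy : x < y) :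
    -(4 * (1 + 2 ^ (α + β))) ≤ slope f x y * jacobi (α + 1) (β + 1) x := by
  have reflected := hf.comp_neg.slope_mul_jacobi_le hβ hα (neg_mem_Ioo_neg_one_one hy)
    (neg_mem_Ioo_neg_one_one hx) (neg_lt_neg hxy)
  have slope_eq : slope (fun x ↦ f (-x)) (-y) (-x) = -slope f x y := by
    rw [slope_def_field, slope_def_field, neg_neg, neg_neg, ← neg_div, neg_sub]
    congr 1
    ring
  rw [jacobi_neg, slope_eq, add_comm β α] at reflected
  linarith

end IsBoundedConvex

/-- The constant in `IsBoundedConvex.abs_slope_mul_jacobi_le`, the growth bound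
`|f'| w_{α+1,β+1} ≤ C` for convex functions with `w_{α,β} |f| ≤ 1`. -/
def slopeConst (α β : ℝ) : ℝ := 4 * (1 + 2 ^ (α + β)) * 2 ^ (α + 1 + (β + 1))

theorem slopeConst_pos (α β : ℝ) : 0 < slopeConst α β := by unfold slopeConst; positivity

theorem IsBoundedConvex.abs_slope_mul_jacobi_le {x y z : ℝ} (hf : IsBoundedConvex α β f)
    (hα : 0 ≤ α) (hβ : 0 ≤ β) (hx : x ∈ Ioo (-1 : ℝ) 1) (hy : y ∈ Ioo (-1 : ℝ) 1) (hxy : x < y)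
    (hleft : 1 + y ≤ 2 * (1 + x)) (hright : 1 - x ≤ 2 * (1 - y)) (hz : z ∈ Icc x y) :
    |slope f x y| * jacobi (α + 1) (β + 1) z ≤ slopeConst α β := by
  have weight_le {u : ℝ} (hu : u ∈ Icc x y) :
      jacobi (α + 1) (β + 1) z ≤ 2 ^ (α + 1 + (β + 1)) * jacobi (α + 1) (β + 1) u :=
    jacobi_le_rpow_mul (by linarith) (by linarith) zero_lt_two
      ⟨by linarith [hx.1, hz.1], by linarith [hy.2, hz.2]⟩
      ⟨by linarith [hx.1, hu.1], by linarith [hy.2, hu.2]⟩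
      (by linarith [hz.2, hu.1]) (by linarith [hz.1, hu.2])
  have bound {u σ : ℝ} (hu : u ∈ Icc x y) (hσ : 0 ≤ σ)
      (hσu : σ * jacobi (α + 1) (β + 1) u ≤ 4 * (1 + 2 ^ (α + β))) :
      σ * jacobi (α + 1) (β + 1) z ≤ slopeConst α β := by
    calc σ * jacobi (α + 1) (β + 1) z
        ≤ σ * (2 ^ (α + 1 + (β + 1)) * jacobi (α + 1) (β + 1) u) := by
          gcongr
          exact weight_le hu
      _ = σ * jacobi (α + 1) (β + 1) u * 2 ^ (α + 1 + (β + 1)) := by ring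
      _ ≤ slopeConst α β := by
          unfold slopeConst
          gcongr
  rcases le_total 0 (slope f x y) with h | h
  · rw [abs_of_nonneg h]
    exact bound (right_mem_Icc.2 hxy.le) h (hf.slope_mul_jacobi_le hα hβ hx hy hxy)
  · rw [abs_of_nonpos h]
    refine bound (left_mem_Icc.2 hxy.le) (neg_nonneg.2 h) ?_
    linarith [hf.neg_le_slope_mul_jacobi hα hβ hx hy hxy]

end ConvexClass

section Polygon

/-- A strictly increasing sequence whose terms `τ 0, …, τ (M + 1)` partition `[a, b]` into `M + 1`
cells of length at most `η`. -/
structure IsGrid (a b η : ℝ) (M : ℕ) (τ : ℕ → ℝ) : Prop where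
  strictMono : StrictMono τ
  zero : τ 0 = a
  last : τ (M + 1) = b
  step_le : ∀ i, τ (i + 1) - τ i ≤ η

variable {a b η x : ℝ} {M i j : ℕ} {τ : ℕ → ℝ} {f : ℝ → ℝ}

theorem exists_isGrid (hab : a < b) (hη : 0 < η) : ∃ M τ, IsGrid a b η M τ := by
  obtain ⟨M, hM⟩ := exists_nat_ge ((b - a) / η)
  have hstep : 0 < (b - a) / (M + 1) := div_pos (sub_pos.2 hab) (by positivity)
  have step_eq (i : ℕ) : a + ((i + 1 : ℕ) : ℝ) * ((b - a) / (M + 1))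
      - (a + i * ((b - a) / (M + 1))) = (b - a) / (M + 1) := by
    push_cast
    ring
  refine ⟨M, fun i ↦ a + i * ((b - a) / (M + 1)), ⟨strictMono_nat_of_lt_succ fun i ↦ ?_, by simp,
    ?_, fun i ↦ ?_⟩⟩
  · rw [← sub_pos, step_eq]
    exact hstep
  · push_cast
    field_simp
    ring
  · rw [step_eq, div_le_iff₀ (by positivity)]
    rw [div_le_iff₀ hη] at hM
    linarith

namespace IsGrid

theorem mono_mesh {η' : ℝ} (hτ : IsGrid a b η M τ) (hη : η ≤ η') : IsGrid a b η' M τ :=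
  ⟨hτ.strictMono, hτ.zero, hτ.last, fun i ↦ (hτ.step_le i).trans hη⟩

theorem mem_Icc (hτ : IsGrid a b η M τ) (hi : i ≤ M + 1) : τ i ∈ Icc a b :=
  ⟨hτ.zero ▸ hτ.strictMono.monotone i.zero_le, hτ.last ▸ hτ.strictMono.monotone hi⟩

end IsGrid

theorem exists_mem_Icc_succ (hx : x ∈ Icc (τ 0) (τ (M + 1))) :
    ∃ j ≤ M, x ∈ Icc (τ j) (τ (j + 1)) := by
  induction M with
  | zero => exact ⟨0, le_rfl, hx⟩
  | succ M ih =>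
    rcases le_total x (τ (M + 1)) with h | h
    · obtain ⟨j, hj, hxj⟩ := ih ⟨hx.1, h⟩
      exact ⟨j, hj.trans M.le_succ, hxj⟩
    · exact ⟨M + 1, le_rfl, h, hx.2⟩

/-- The slope of the chord of the graph of `f` over the `i`-th cell `[τ i, τ (i + 1)]`. -/
def chordSlope (f : ℝ → ℝ) (τ : ℕ → ℝ) (i : ℕ) : ℝ := slope f (τ i) (τ (i + 1))

/-- The polygonal line interpolating `f` at `τ 0, …, τ (M + 1)`, extended linearly beyond these
points; it is written as an affine function plus truncated powers at the interior knots. -/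
def polygon (f : ℝ → ℝ) (τ : ℕ → ℝ) (M : ℕ) (x : ℝ) : ℝ :=
  f (τ 0) + chordSlope f τ 0 * (x - τ 0)
    + ∑ i ∈ Finset.range M, (chordSlope f τ (i + 1) - chordSlope f τ i) * max (x - τ (i + 1)) 0

theorem continuous_polygon (f : ℝ → ℝ) (τ : ℕ → ℝ) (M : ℕ) : Continuous (polygon f τ M) := by
  unfold polygon
  fun_prop

theorem chordSlope_mul_sub (f : ℝ → ℝ) (τ : ℕ → ℝ) (i : ℕ) :
    chordSlope f τ i * (τ (i + 1) - τ i) = f (τ (i + 1)) - f (τ i) := by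
  rw [mul_comm]
  exact sub_smul_slope f (τ i) (τ (i + 1))

theorem chordSlope_le_succ {s : Set ℝ} (hf : ConvexOn ℝ s f) (hτ : StrictMono τ) (hi : τ i ∈ s)
    (hi' : τ (i + 2) ∈ s) : chordSlope f τ i ≤ chordSlope f τ (i + 1) := by
  rw [chordSlope, chordSlope, slope_def_field, slope_def_field]
  exact hf.slope_mono_adjacent hi hi' (hτ i.lt_succ_self) (hτ (i + 1).lt_succ_self)

theorem affine_add_sum_chordSlope_sub_mul (f : ℝ → ℝ) (τ : ℕ → ℝ) (j : ℕ) (x : ℝ) :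
    f (τ 0) + chordSlope f τ 0 * (x - τ 0)
      + ∑ i ∈ Finset.range j, (chordSlope f τ (i + 1) - chordSlope f τ i) * (x - τ (i + 1))
    = f (τ j) + chordSlope f τ j * (x - τ j) := by
  induction j with
  | zero => simp
  | succ j ih =>
    rw [Finset.sum_range_succ, ← add_assoc, ih]
    linarith [chordSlope_mul_sub f τ j]

theorem polygon_eq (hτ : Monotone τ) (hj : j ≤ M) (hleft : j = 0 ∨ τ j ≤ x)
    (hright : j = M ∨ x ≤ τ (j + 1)) :
    polygon f τ M x = f (τ j) + chordSlope f τ j * (x - τ j) := by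
  rw [← affine_add_sum_chordSlope_sub_mul, polygon, ← Finset.sum_range_add_sum_Ico _ hj,
    Finset.sum_congr rfl fun i hi ↦ ?_, Finset.sum_eq_zero (s := Finset.Ico j M) fun i hi ↦ ?_,
    add_zero]
  · rw [Finset.mem_Ico] at hi
    rw [max_eq_right (sub_nonpos.2 ((hright.resolve_left (by lia)).trans (hτ (by lia)))), mul_zero]
  · rw [Finset.mem_range] at hi
    rw [max_eq_left (sub_nonneg.2 ((hτ hi).trans (hleft.resolve_left (by lia))))]

theorem abs_sub_chord_le {ε : ℝ} (hab : a < b) (hx : x ∈ Icc a b) (ha : |f x - f a| ≤ ε)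
    (hb : |f x - f b| ≤ ε) : |f x - (f a + slope f a b * (x - a))| ≤ ε := by
  have hba : 0 < b - a := sub_pos.2 hab
  set s := (x - a) / (b - a) with hs
  have s_nonneg : 0 ≤ s := div_nonneg (sub_nonneg.2 hx.1) hba.le
  have s_le_one : s ≤ 1 := (div_le_one hba).2 (by linarith [hx.2])
  calc |f x - (f a + slope f a b * (x - a))|
      = |(1 - s) * (f x - f a) + s * (f x - f b)| := by
        rw [slope_def_field, hs]
        congr 1
        ring
    _ ≤ (1 - s) * |f x - f a| + s * |f x - f b| := by
        refine (abs_add_le _ _).trans_eq ?_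
        rw [abs_mul, abs_mul, abs_of_nonneg s_nonneg, abs_of_nonneg (sub_nonneg.2 s_le_one)]
    _ ≤ (1 - s) * ε + s * ε := by gcongr
    _ = ε := by ring

theorem exists_mesh_abs_sub_polygon_le {ε : ℝ} (hf : ContinuousOn f (Icc a b)) (hε : 0 < ε) :
    ∃ η > 0, ∀ M τ, IsGrid a b η M τ → ∀ x ∈ Icc a b, |f x - polygon f τ M x| ≤ ε := by
  have unif_cont := isCompact_Icc.uniformContinuousOn_of_continuous hf
  obtain ⟨η, η_pos, hη⟩ := Metric.uniformContinuousOn_iff_le.1 unif_cont ε hε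
  refine ⟨η, η_pos, fun M τ hτ x hx ↦ ?_⟩
  obtain ⟨j, hj, hxj⟩ := exists_mem_Icc_succ (hτ.zero.symm ▸ hτ.last.symm ▸ hx)
  have near (i : ℕ) (hi : i ≤ M + 1) (hxi : |x - τ i| ≤ η) : |f x - f (τ i)| ≤ ε :=
    hη x hx (τ i) (hτ.mem_Icc hi) hxi
  rw [polygon_eq hτ.strictMono.monotone hj (Or.inr hxj.1) (Or.inr hxj.2)]
  have step_le := hτ.step_le j
  refine abs_sub_chord_le (hτ.strictMono j.lt_succ_self) hxj (near j (by lia) ?_)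
    (near (j + 1) (by lia) ?_) <;>
  · rw [abs_le]
    constructor <;> linarith [hxj.1, hxj.2]

end Polygon

section AbelSummation

theorem mul_abs_sub_le_mul_abs_log_sub {s p q K : ℝ} (hs : 0 ≤ s) (hp : 0 < p) (hq : 0 < q)
    (hsp : s * p ≤ K) (hsq : s * q ≤ K) :
    s * |q - p| ≤ K * |Real.log q - Real.log p| := by
  wlog hpq : p ≤ q generalizing p q
  · rw [abs_sub_comm q, abs_sub_comm (Real.log q)]
    exact this hq hp hsq hsp (le_of_not_ge hpq)
  have one_sub_div_le : 1 - p / q ≤ |Real.log q - Real.log p| := by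
    rw [← Real.log_div hq.ne' hp.ne', ← inv_div q p]
    exact (Real.one_sub_inv_le_log_of_pos (by positivity)).trans (le_abs_self _)
  have : 0 ≤ 1 - p / q := sub_nonneg.2 ((div_le_one hq).2 hpq)
  have K_nonneg : 0 ≤ K := (mul_nonneg hs hq.le).trans hsq
  calc s * |q - p| = s * q * (1 - p / q) := by
        rw [abs_of_nonneg (sub_nonneg.2 hpq)]
        field_simp
    _ ≤ K * |Real.log q - Real.log p| := by gcongr

theorem sum_range_sub_mul_le {s p : ℕ → ℝ} {K : ℝ} {M : ℕ} (hp : ∀ i ≤ M, 0 < p i)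
    (hsp : ∀ i ≤ M, |s i| * p i ≤ K) (hsp' : ∀ i < M, |s i| * p (i + 1) ≤ K) :
    ∑ i ∈ Finset.range M, (s (i + 1) - s i) * p (i + 1)
      ≤ K * (2 + ∑ i ∈ Finset.range M, |Real.log (p (i + 1)) - Real.log (p i)|) := by
  have by_parts : ∑ i ∈ Finset.range M, (s (i + 1) - s i) * p (i + 1)
      = s M * p M - s 0 * p 0 - ∑ i ∈ Finset.range M, s i * (p (i + 1) - p i) := by
    rw [← Finset.sum_range_sub (fun i ↦ s i * p i), ← Finset.sum_sub_distrib]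
    exact Finset.sum_congr rfl fun i _ ↦ by ring
  have abs_boundary_le {i : ℕ} (hi : i ≤ M) : |s i * p i| ≤ K := by
    rw [abs_mul, abs_of_pos (hp i hi)]
    exact hsp i hi
  have abs_sum_le : |∑ i ∈ Finset.range M, s i * (p (i + 1) - p i)|
      ≤ K * ∑ i ∈ Finset.range M, |Real.log (p (i + 1)) - Real.log (p i)| := by
    rw [Finset.mul_sum]
    refine (Finset.abs_sum_le_sum_abs _ _).trans (Finset.sum_le_sum fun i hi ↦ ?_)
    rw [Finset.mem_range] at hi
    rw [abs_mul]
    exact mul_abs_sub_le_mul_abs_log_sub (abs_nonneg _) (hp i hi.le) (hp (i + 1) hi)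
      (hsp i hi.le) (hsp' i hi)
  rw [by_parts]
  linarith [abs_le.1 (abs_boundary_le M.zero_le), abs_le.1 (abs_boundary_le le_rfl),
    abs_le.1 abs_sum_le]

theorem log_jacobi {α β x : ℝ} (hx : x ∈ Ioo (-1 : ℝ) 1) :
    Real.log (jacobi α β x) = α * Real.log (1 + x) + β * Real.log (1 - x) := by
  have hleft : 0 < 1 + x := by linarith [hx.1]
  have hright : 0 < 1 - x := by linarith [hx.2]
  rw [jacobi, Real.log_mul (Real.rpow_pos_of_pos hleft _).ne' (Real.rpow_pos_of_pos hright _).ne',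
    Real.log_rpow hleft, Real.log_rpow hright]

theorem abs_log_jacobi_sub_le {α β x y : ℝ} (hα : 0 ≤ α) (hβ : 0 ≤ β) (hx : -1 < x)
    (hxy : x ≤ y) (hy : y < 1) :
    |Real.log (jacobi α β y) - Real.log (jacobi α β x)|
      ≤ (α * Real.log (1 + y) - β * Real.log (1 - y))
        - (α * Real.log (1 + x) - β * Real.log (1 - x)) := by
  rw [log_jacobi ⟨hx, hxy.trans_lt hy⟩, log_jacobi ⟨hx.trans_le hxy, hy⟩, abs_le]
  have hleft : α * Real.log (1 + x) ≤ α * Real.log (1 + y) := by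
    gcongr
    linarith
  have hright : β * Real.log (1 - y) ≤ β * Real.log (1 - x) := by
    gcongr
  constructor <;> linarith

theorem sum_abs_log_jacobi_sub_le {α β δ : ℝ} {τ : ℕ → ℝ} {M : ℕ} (hα : 0 ≤ α) (hβ : 0 ≤ β)
    (hδ : 0 < δ) (hτ : Monotone τ) (hleft : -1 + δ ≤ τ 0) (hright : τ M ≤ 1 - δ) :
    ∑ i ∈ Finset.range M, |Real.log (jacobi α β (τ (i + 1))) - Real.log (jacobi α β (τ i))|
      ≤ (α + β) * Real.log (2 / δ) := by
  have hM := hτ M.zero_le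
  have log_ratio_le {u v : ℝ} (hv : δ ≤ v) (hu : u ≤ 2) (hu_pos : 0 < u) :
      Real.log u - Real.log v ≤ Real.log (2 / δ) := by
    rw [Real.log_div two_ne_zero hδ.ne']
    gcongr
  calc ∑ i ∈ Finset.range M, |Real.log (jacobi α β (τ (i + 1))) - Real.log (jacobi α β (τ i))|
      ≤ ∑ i ∈ Finset.range M,
          ((α * Real.log (1 + τ (i + 1)) - β * Real.log (1 - τ (i + 1)))
            - (α * Real.log (1 + τ i) - β * Real.log (1 - τ i))) := by
        refine Finset.sum_le_sum fun i hi ↦ ?_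
        have h₀ := hτ i.zero_le
        have h₁ := hτ (Finset.mem_range.1 hi : i + 1 ≤ M)
        exact abs_log_jacobi_sub_le hα hβ (by linarith) (hτ i.le_succ) (by linarith)
    _ = α * (Real.log (1 + τ M) - Real.log (1 + τ 0))
          + β * (Real.log (1 - τ 0) - Real.log (1 - τ M)) := by
        rw [Finset.sum_range_sub fun i ↦ α * Real.log (1 + τ i) - β * Real.log (1 - τ i)]
        ring
    _ ≤ α * Real.log (2 / δ) + β * Real.log (2 / δ) := by
        gcongr <;> exact log_ratio_le (by linarith) (by linarith) (by linarith)
    _ = (α + β) * Real.log (2 / δ) := by ring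

end AbelSummation

section UpperBound

variable {α β δ : ℝ} {f : ℝ → ℝ} {M : ℕ} {τ : ℕ → ℝ}

open Polynomial in
theorem En_polygon_le {n : ℕ} {wt : ℝ → ℝ} {q : ℝ≥0∞} (hn : 1 ≤ n) (hq : 1 ≤ q)
    (hwt : Measurable wt) :
    En n (polygon f τ M) wt q ≤ ∑ i ∈ Finset.range M,
      ‖chordSlope f τ (i + 1) - chordSlope f τ i‖ₑ * En n (fun x ↦ max (x - τ (i + 1)) 0) wt q := by
  have affine_eq_zero : En n (fun x ↦ f (τ 0) + chordSlope f τ 0 * (x - τ 0)) wt q = 0 := by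
    have natDegree_le : (C (chordSlope f τ 0) * (X - C (τ 0)) + C (f (τ 0))).natDegree ≤ n := by
      refine natDegree_add_C.trans_le ((natDegree_C_mul_le _ _).trans ?_)
      rwa [natDegree_X_sub_C]
    have := En_eval (wt := wt) (q := q) natDegree_le
    simpa only [eval_add, eval_mul, eval_sub, eval_X, eval_C, add_comm _ (f (τ 0))] using this
  calc En n (polygon f τ M) wt q
      ≤ En n (fun x ↦ f (τ 0) + chordSlope f τ 0 * (x - τ 0)) wt q + En n (fun x ↦
          ∑ i ∈ Finset.range M,
            (chordSlope f τ (i + 1) - chordSlope f τ i) * max (x - τ (i + 1)) 0) wt q :=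
        En_add_le hq hwt (by fun_prop) (by fun_prop)
    _ ≤ ∑ i ∈ Finset.range M, En n (fun x ↦
          (chordSlope f τ (i + 1) - chordSlope f τ i) * max (x - τ (i + 1)) 0) wt q := by
        rw [affine_eq_zero, zero_add]
        exact En_sum_le _ hq hwt fun i _ ↦ by fun_prop
    _ ≤ _ := Finset.sum_le_sum fun i _ ↦ En_const_mul_le _

theorem LpOn_one_le_of_abs_le_of_abs_le {g : ℝ → ℝ} {ε C : ℝ} (hε : 0 ≤ ε) (hδ : 0 ≤ δ)
    (hδ₁ : δ ≤ 1) (inside : ∀ x ∈ Icc (-1 + δ) (1 - δ), |g x| ≤ ε)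
    (left : ∀ x ∈ Ioo (-1) (-1 + δ), |g x| ≤ C) (right : ∀ x ∈ Ioo (1 - δ) 1, |g x| ≤ C) :
    LpOn g 1 (-1) 1 ≤ ENNReal.ofReal (δ * C) + ENNReal.ofReal (2 * ε) + ENNReal.ofReal (δ * C) := by
  calc LpOn g 1 (-1) 1
      ≤ LpOn g 1 (-1) (-1 + δ) + LpOn g 1 (-1 + δ) (1 - δ) + LpOn g 1 (1 - δ) 1 := by
        refine (LpOn_one_le_add g (-1) (1 - δ) 1).trans ?_
        gcongr
        exact LpOn_one_le_add g (-1) (-1 + δ) (1 - δ)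
    _ ≤ ENNReal.ofReal (δ * C) + ENNReal.ofReal (2 * ε) + ENNReal.ofReal (δ * C) := by
        gcongr
        · exact (LpOn_one_le_of_abs_le (by linarith) left).trans_eq (by ring_nf)
        · refine (LpOn_one_le_of_abs_le (by linarith) fun x hx ↦
            inside x (Ioo_subset_Icc_self hx)).trans (ENNReal.ofReal_le_ofReal ?_)
          gcongr
          linarith
        · exact (LpOn_one_le_of_abs_le (by linarith) right).trans_eq (by ring_nf)

namespace IsBoundedConvex

theorem abs_chordSlope_mul_jacobi_le {i : ℕ} {z : ℝ} (hf : IsBoundedConvex α β f) (hα : 0 ≤ α)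
    (hβ : 0 ≤ β) (hδ : 0 < δ) (hτ : IsGrid (-1 + δ) (1 - δ) δ M τ) (hi : i ≤ M)
    (hz : z ∈ Icc (τ i) (τ (i + 1))) :
    |chordSlope f τ i| * jacobi (α + 1) (β + 1) z ≤ slopeConst α β := by
  have hτ_left := hτ.mem_Icc (hi.trans M.le_succ)
  have hτ_right := hτ.mem_Icc (Nat.succ_le_succ hi)
  have step_le := hτ.step_le i
  refine hf.abs_slope_mul_jacobi_le hα hβ ?_ ?_ (hτ.strictMono i.lt_succ_self)
    (by linarith [hτ_left.1]) (by linarith [hτ_right.2]) hz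
  · exact ⟨by linarith [hτ_left.1], by linarith [hτ_left.2]⟩
  · exact ⟨by linarith [hτ_right.1], by linarith [hτ_right.2]⟩

theorem sum_chordSlope_sub_mul_jacobi_le (hf : IsBoundedConvex α β f) (hα : 0 ≤ α) (hβ : 0 ≤ β)
    (hδ : 0 < δ) (hτ : IsGrid (-1 + δ) (1 - δ) δ M τ) :
    ∑ i ∈ Finset.range M,
        (chordSlope f τ (i + 1) - chordSlope f τ i) * jacobi (α + 1) (β + 1) (τ (i + 1))
      ≤ slopeConst α β * (2 + (α + 1 + (β + 1)) * Real.log (2 / δ)) := by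
  have mono := hτ.strictMono.monotone
  have weight_pos (i : ℕ) (hi : i ≤ M) : 0 < jacobi (α + 1) (β + 1) (τ i) := by
    have := hτ.mem_Icc (hi.trans M.le_succ)
    exact jacobi_pos ⟨by linarith [this.1], by linarith [this.2]⟩
  refine (sum_range_sub_mul_le weight_pos
    (fun i hi ↦ hf.abs_chordSlope_mul_jacobi_le hα hβ hδ hτ hi (left_mem_Icc.2 (mono i.le_succ)))
    fun i hi ↦ hf.abs_chordSlope_mul_jacobi_le hα hβ hδ hτ hi.le
      (right_mem_Icc.2 (mono i.le_succ))).trans ?_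
  have := slopeConst_pos α β
  gcongr
  exact sum_abs_log_jacobi_sub_le (by linarith) (by linarith) hδ mono hτ.zero.ge
    (hτ.mem_Icc M.le_succ).2

theorem En_polygon_le_of_truncatedPower {n : ℕ} {B : ℝ} (hf : IsBoundedConvex α β f)
    (hα : 0 ≤ α) (hβ : 0 ≤ β) (hδ : 0 < δ) (hτ : IsGrid (-1 + δ) (1 - δ) δ M τ) (hn : 1 ≤ n)
    (hB : 0 ≤ B) (trunc : ∀ t, |t| ≤ 1 - δ → En n (fun x ↦ max (x - t) 0) (jacobi α β) 1
      ≤ ENNReal.ofReal (B * jacobi (α + 1) (β + 1) t)) :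
    En n (polygon f τ M) (jacobi α β) 1
      ≤ ENNReal.ofReal
          (B * (slopeConst α β * (2 + (α + 1 + (β + 1)) * Real.log (2 / δ)))) := by
  have knot_mem {i : ℕ} (hi : i ≤ M + 1) : τ i ∈ Ioo (-1 : ℝ) 1 :=
    ⟨by linarith [(hτ.mem_Icc hi).1], by linarith [(hτ.mem_Icc hi).2]⟩
  have jump_nonneg {i : ℕ} (hi : i < M) : 0 ≤ chordSlope f τ (i + 1) - chordSlope f τ i :=
    sub_nonneg.2 (chordSlope_le_succ hf.convexOn hτ.strictMono (knot_mem (by lia))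
      (knot_mem (by lia)))
  have term_le {i : ℕ} (hi : i < M) :
      ‖chordSlope f τ (i + 1) - chordSlope f τ i‖ₑ
          * En n (fun x ↦ max (x - τ (i + 1)) 0) (jacobi α β) 1
        ≤ ENNReal.ofReal (B * ((chordSlope f τ (i + 1) - chordSlope f τ i)
          * jacobi (α + 1) (β + 1) (τ (i + 1)))) := by
    have hτi := hτ.mem_Icc (Nat.succ_le_succ hi.le)
    have abs_le : |τ (i + 1)| ≤ 1 - δ := abs_le.2 ⟨by linarith [hτi.1], hτi.2⟩
    rw [Real.enorm_of_nonneg (jump_nonneg hi), mul_left_comm, ENNReal.ofReal_mul (jump_nonneg hi)]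
    gcongr
    exact trunc _ abs_le
  refine (En_polygon_le hn le_rfl (continuous_jacobi hα hβ).measurable).trans
    ((Finset.sum_le_sum fun i hi ↦ term_le (Finset.mem_range.1 hi)).trans ?_)
  rw [← ENNReal.ofReal_sum_of_nonneg fun i hi ↦ mul_nonneg hB (mul_nonneg
    (jump_nonneg (Finset.mem_range.1 hi)) (jacobi_pos (knot_mem (by grind))).le),
    ← Finset.mul_sum]
  gcongr
  exact hf.sum_chordSlope_sub_mul_jacobi_le hα hβ hδ hτ

theorem jacobi_mul_abs_sub_affine_le {W K σ x y : ℝ} (hf : IsBoundedConvex α β f)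
    (hx : x ∈ Ioo (-1 : ℝ) 1) (hy : y ∈ Ioo (-1 : ℝ) 1) (hW : 0 ≤ W)
    (hxy : jacobi α β x ≤ W * jacobi α β y) (hσ : |σ| * jacobi (α + 1) (β + 1) y ≤ K)
    (hdist : |x - y| ≤ (1 + y) * (1 - y)) :
    jacobi α β x * |f x - (f y + σ * (x - y))| ≤ 1 + W * (1 + K) := by
  have weight_nonneg : 0 ≤ jacobi α β x := (jacobi_pos hx).le
  have linear_le : jacobi α β x * (|σ| * |x - y|) ≤ W * K := by
    have : 0 ≤ jacobi α β y := (jacobi_pos hy).le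
    calc jacobi α β x * (|σ| * |x - y|)
        ≤ W * jacobi α β y * (|σ| * ((1 + y) * (1 - y))) := by gcongr
      _ = W * (|σ| * jacobi (α + 1) (β + 1) y) := by rw [jacobi_succ hy]; ring
      _ ≤ W * K := by gcongr
  calc jacobi α β x * |f x - (f y + σ * (x - y))|
      ≤ jacobi α β x * (|f x| + (|f y| + |σ| * |x - y|)) := by
        gcongr
        rw [← abs_mul]
        exact (abs_sub _ _).trans (by gcongr; exact abs_add_le _ _)
    _ = jacobi α β x * |f x| + jacobi α β x * |f y| + jacobi α β x * (|σ| * |x - y|) := by ring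
    _ ≤ 1 + W + W * K := by
        gcongr
        · exact hf.jacobi_mul_abs_le x hx
        · exact hf.jacobi_mul_abs_le_of_le hW hy hxy
    _ = 1 + W * (1 + K) := by ring

theorem jacobi_mul_abs_sub_polygon_le_left {x : ℝ} (hf : IsBoundedConvex α β f) (hα : 0 ≤ α)
    (hβ : 0 ≤ β) (hδ : 0 < δ) (hδ₁ : δ ≤ 1) (hτ : IsGrid (-1 + δ) (1 - δ) δ M τ)
    (hx : x ∈ Ioo (-1) (-1 + δ)) :
    jacobi α β x * |f x - polygon f τ M x| ≤ 1 + 2 ^ (α + β) * (1 + slopeConst α β) := by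
  have mono := hτ.strictMono.monotone
  have hx' : x ∈ Ioo (-1 : ℝ) 1 := ⟨hx.1, by linarith [hx.2]⟩
  have hτ₀ : τ 0 ∈ Ioo (-1 : ℝ) 1 := by
    have := hτ.mem_Icc (M + 1).zero_le
    exact ⟨by linarith [this.1], by linarith [this.2]⟩
  have slope_le :=
    hf.abs_chordSlope_mul_jacobi_le hα hβ hδ hτ M.zero_le (left_mem_Icc.2 (mono zero_le_one))
  rw [polygon_eq mono M.zero_le (Or.inl rfl)
    (Or.inr ((hx.2.le.trans_eq hτ.zero.symm).trans (mono (Nat.zero_le _))))]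
  refine hf.jacobi_mul_abs_sub_affine_le hx' hτ₀ (by positivity)
    (jacobi_le_rpow_mul hα hβ zero_lt_two (Ioo_subset_Icc_self hx') (Ioo_subset_Icc_self hτ₀)
      ?_ ?_) slope_le ?_
  all_goals rw [hτ.zero]
  · linarith [hx.2]
  · linarith [hx.1]
  · rw [abs_le]
    constructor <;> nlinarith [hx.1, hx.2]

theorem jacobi_mul_abs_sub_polygon_le_right {x : ℝ} (hf : IsBoundedConvex α β f) (hα : 0 ≤ α)
    (hβ : 0 ≤ β) (hδ : 0 < δ) (hδ₁ : δ ≤ 1) (hτ : IsGrid (-1 + δ) (1 - δ) δ M τ)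
    (hx : x ∈ Ioo (1 - δ) 1) :
    jacobi α β x * |f x - polygon f τ M x| ≤ 1 + 2 ^ (α + β) * (1 + slopeConst α β) := by
  have mono := hτ.strictMono.monotone
  have hx' : x ∈ Ioo (-1 : ℝ) 1 := ⟨by linarith [hx.1], hx.2⟩
  have hτ_last : τ (M + 1) ∈ Ioo (-1 : ℝ) 1 := by
    have := hτ.mem_Icc le_rfl
    exact ⟨by linarith [this.1], by linarith [this.2]⟩
  have slope_le :=
    hf.abs_chordSlope_mul_jacobi_le hα hβ hδ hτ le_rfl (right_mem_Icc.2 (mono M.le_succ))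
  have polygon_eq_last : polygon f τ M x
      = f (τ (M + 1)) + chordSlope f τ M * (x - τ (M + 1)) := by
    rw [polygon_eq mono le_rfl (Or.inr (by linarith [mono M.le_succ, hτ.last, hx.1])) (Or.inl rfl)]
    linarith [chordSlope_mul_sub f τ M]
  rw [polygon_eq_last]
  refine hf.jacobi_mul_abs_sub_affine_le hx' hτ_last (by positivity)
    (jacobi_le_rpow_mul hα hβ zero_lt_two (Ioo_subset_Icc_self hx') (Ioo_subset_Icc_self hτ_last)
      ?_ ?_) slope_le ?_
  all_goals rw [hτ.last]
  · linarith [hx.2]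
  · linarith [hx.1]
  · rw [abs_le]
    constructor <;> nlinarith [hx.1, hx.2]

theorem exists_LpOn_sub_polygon_le (hf : IsBoundedConvex α β f) (hα : 0 ≤ α) (hβ : 0 ≤ β)
    (hδ : 0 < δ) (hδ₁ : δ < 1) :
    ∃ M τ, IsGrid (-1 + δ) (1 - δ) δ M τ ∧
      LpOn (fun x ↦ jacobi α β x * (f x - polygon f τ M x)) 1 (-1) 1
        ≤ ENNReal.ofReal (2 * (2 + 2 ^ (α + β) * (1 + slopeConst α β)) * δ) := by
  have subset : Icc (-1 + δ) (1 - δ) ⊆ Ioo (-1 : ℝ) 1 :=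
    Icc_subset_Ioo (by linarith) (by linarith)
  obtain ⟨η, η_pos, hη⟩ := exists_mesh_abs_sub_polygon_le
    ((hf.convexOn.continuousOn isOpen_Ioo).mono subset)
    (by positivity : 0 < δ / 2 ^ (α + β))
  obtain ⟨M, τ, hτη⟩ := exists_isGrid (by linarith : -1 + δ < 1 - δ) (lt_min η_pos hδ)
  have hτ := hτη.mono_mesh (min_le_right η δ)
  have abs_weight_mul {x : ℝ} (hx : x ∈ Ioo (-1 : ℝ) 1) :
      |jacobi α β x * (f x - polygon f τ M x)| = jacobi α β x * |f x - polygon f τ M x| := by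
    rw [abs_mul, abs_of_pos (jacobi_pos hx)]
  refine ⟨M, τ, hτ, (LpOn_one_le_of_abs_le_of_abs_le (ε := δ)
    (C := 1 + 2 ^ (α + β) * (1 + slopeConst α β)) hδ.le hδ.le hδ₁.le
    (fun x hx ↦ ?_) (fun x hx ↦ ?_) (fun x hx ↦ ?_)).trans_eq ?_⟩
  · rw [abs_weight_mul (subset hx)]
    calc jacobi α β x * |f x - polygon f τ M x| ≤ 2 ^ (α + β) * (δ / 2 ^ (α + β)) := by
          gcongr
          · exact jacobi_le_two_rpow hα hβ (Ioo_subset_Icc_self (subset hx))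
          · exact hη M τ (hτη.mono_mesh (min_le_left η δ)) x hx
      _ = δ := mul_div_cancel₀ _ (by positivity)
  · rw [abs_weight_mul ⟨hx.1, by linarith [hx.2]⟩]
    exact hf.jacobi_mul_abs_sub_polygon_le_left hα hβ hδ hδ₁.le hτ hx
  · rw [abs_weight_mul ⟨by linarith [hx.1], hx.2⟩]
    exact hf.jacobi_mul_abs_sub_polygon_le_right hα hβ hδ hδ₁.le hτ hx
  · have := slopeConst_pos α β
    rw [← ENNReal.ofReal_add (by positivity) (by positivity),
      ← ENNReal.ofReal_add (by positivity) (by positivity)]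
    ring_nf

theorem LpOn_jacobi_mul_le_two (hf : IsBoundedConvex α β f) :
    LpOn (fun x ↦ jacobi α β x * f x) 1 (-1) 1 ≤ 2 := by
  refine (LpOn_one_le_of_abs_le (C := 1) (by norm_num) fun x hx ↦ ?_).trans (by norm_num)
  rw [abs_mul, abs_of_pos (jacobi_pos hx)]
  exact hf.jacobi_mul_abs_le x hx

end IsBoundedConvex

theorem half_le_log_natCast_add_one {n : ℕ} (hn : 1 ≤ n) : 1 / 2 ≤ Real.log (n + 1) := by
  have : (1 : ℝ) ≤ n := by exact_mod_cast hn
  have := Real.log_le_log (by norm_num) (by linarith : (2 : ℝ) ≤ n + 1)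
  linarith [Real.log_two_gt_d9]

theorem log_two_div_div_sq_le {κ : ℝ} {n : ℕ} (hκ : 2 ≤ κ) (hn : 1 ≤ n) :
    Real.log (2 / (κ / n ^ 2)) ≤ 2 * Real.log (n + 1) := by
  have : (0 : ℝ) < n := by exact_mod_cast hn
  calc Real.log (2 / (κ / n ^ 2)) ≤ Real.log ((n + 1) ^ 2) := by
        refine Real.log_le_log (by positivity) ?_
        rw [div_div_eq_mul_div, div_le_iff₀ (by linarith)]
        nlinarith
    _ = 2 * Real.log (n + 1) := by simp

theorem exists_En_polygon_le (hα : 0 ≤ α) (hβ : 0 ≤ β) :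
    ∃ C > (0 : ℝ), ∃ κ ≥ (2 : ℝ), ∀ n : ℕ, 1 ≤ n → ∀ f, IsBoundedConvex α β f →
      ∀ M τ, IsGrid (-1 + κ / n ^ 2) (1 - κ / n ^ 2) (κ / n ^ 2) M τ →
        En n (polygon f τ M) (jacobi α β) 1 ≤ ENNReal.ofReal (C * Real.log (n + 1) / n ^ 2) := by
  obtain ⟨A, hA, κ, hκ, trunc⟩ := exists_En_truncatedPower_le hα hβ
  have hS := slopeConst_pos α β
  refine ⟨A * (slopeConst α β * (4 + (α + 1 + (β + 1)) * 2)), by positivity, κ, hκ,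
    fun n hn f hf M τ hτ ↦ ?_⟩
  have : (0 : ℝ) < n := by exact_mod_cast hn
  have trunc' (t : ℝ) (ht : |t| ≤ 1 - κ / n ^ 2) : En n (fun x ↦ max (x - t) 0) (jacobi α β) 1
      ≤ ENNReal.ofReal (A / n ^ 2 * jacobi (α + 1) (β + 1) t) :=
    (trunc n hn t (by linarith)).trans_eq (by ring_nf)
  refine (hf.En_polygon_le_of_truncatedPower hα hβ (by positivity) hτ hn (by positivity)
    trunc').trans (ENNReal.ofReal_le_ofReal ?_)
  calc A / n ^ 2 * (slopeConst α β * (2 + (α + 1 + (β + 1)) * Real.log (2 / (κ / n ^ 2))))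
      ≤ A / n ^ 2 * (slopeConst α β
          * (4 * Real.log (n + 1) + (α + 1 + (β + 1)) * (2 * Real.log (n + 1)))) := by
        gcongr
        · linarith [half_le_log_natCast_add_one hn]
        · exact log_two_div_div_sq_le hκ hn
    _ = A * (slopeConst α β * (4 + (α + 1 + (β + 1)) * 2)) * Real.log (n + 1) / n ^ 2 := by ring

theorem exists_En_le_of_isBoundedConvex (hα : 0 ≤ α) (hβ : 0 ≤ β) :
    ∃ C > (0 : ℝ), ∀ n : ℕ, 1 ≤ n → ∀ f, Measurable f → IsBoundedConvex α β f →
      En n f (jacobi α β) 1 ≤ ENNReal.ofReal (C * Real.log (n + 1) / n ^ 2) := by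
  obtain ⟨C, hC, κ, hκ, En_polygon⟩ := exists_En_polygon_le hα hβ
  have hS := slopeConst_pos α β
  set D := 2 * (2 + 2 ^ (α + β) * (1 + slopeConst α β))
  have D_ge : 4 ≤ D := by
    have : 0 ≤ 2 ^ (α + β) * (1 + slopeConst α β) := by positivity
    linarith
  refine ⟨2 * D * κ + C, by positivity, fun n hn f f_meas hf ↦ ?_⟩
  have : (0 : ℝ) < n := by exact_mod_cast hn
  have log_ge := half_le_log_natCast_add_one hn
  have hδ : 0 < κ / n ^ 2 := by positivity
  have D_mul_le : D * (κ / n ^ 2) ≤ 2 * D * κ * Real.log (n + 1) / n ^ 2 := by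
    rw [← mul_div_assoc, div_le_div_iff_of_pos_right (by positivity)]
    nlinarith [show 0 ≤ D * κ by positivity]
  rcases lt_or_ge (κ / n ^ 2) 1 with hδ₁ | hδ₁
  · obtain ⟨M, τ, hτ, error_le⟩ := hf.exists_LpOn_sub_polygon_le hα hβ hδ hδ₁
    have polygon_meas := (continuous_polygon f τ M).measurable
    calc En n f (jacobi α β) 1
        = En n (fun x ↦ (f x - polygon f τ M x) + polygon f τ M x) (jacobi α β) 1 := by
          simp only [sub_add_cancel]
      _ ≤ En n (fun x ↦ f x - polygon f τ M x) (jacobi α β) 1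
            + En n (polygon f τ M) (jacobi α β) 1 :=
          En_add_le le_rfl (continuous_jacobi hα hβ).measurable (f_meas.sub polygon_meas)
            polygon_meas
      _ ≤ ENNReal.ofReal (D * (κ / n ^ 2)) + ENNReal.ofReal (C * Real.log (n + 1) / n ^ 2) :=
          add_le_add (En_le_LpOn_mul.trans error_le) (En_polygon n hn f hf M τ hτ)
      _ ≤ ENNReal.ofReal ((2 * D * κ + C) * Real.log (n + 1) / n ^ 2) := by
          rw [← ENNReal.ofReal_add (by positivity) (by positivity), add_mul, add_div]
          gcongr
  · calc En n f (jacobi α β) 1 ≤ ENNReal.ofReal 2 :=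
          (En_le_LpOn_mul.trans hf.LpOn_jacobi_mul_le_two).trans (by norm_num)
      _ ≤ ENNReal.ofReal ((2 * D * κ + C) * Real.log (n + 1) / n ^ 2) := by
          refine ENNReal.ofReal_le_ofReal ?_
          rw [add_mul, add_div]
          have : 0 ≤ C * Real.log (n + 1) / n ^ 2 := by positivity
          nlinarith

theorem exists_EClass_le (hα : 0 ≤ α) (hβ : 0 ≤ β) :
    ∃ C > (0 : ℝ), ∀ n : ℕ, 1 ≤ n → EClass (MSet 2 ∩ BSet ∞ α β) n (jacobi α β) 1
      ≤ ENNReal.ofReal (C * Real.log (n + 1) / n ^ 2) := by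
  obtain ⟨C, hC, En_le⟩ := exists_En_le_of_isBoundedConvex hα hβ
  exact ⟨C, hC, fun n hn ↦ iSup₂_le fun f hf ↦
    En_le n hn f hf.2.1 (isBoundedConvex_of_mem hα hβ hf)⟩

end UpperBound

section LowerBound

open Polynomial

theorem integral_cos_pow_mul_cos_int_mul_eq_zero {k : ℕ} {m : ℤ} (hkm : k < m) :
    ∫ θ in (0 : ℝ)..Real.pi, Real.cos θ ^ k * Real.cos (m * θ) = 0 := by
  induction k generalizing m with
  | zero =>
    have : (m : ℝ) ≠ 0 := by exact_mod_cast hkm.ne'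
    simp [intervalIntegral.integral_comp_mul_left Real.cos this, Real.sin_int_mul_pi]
  | succ k ih =>
    have product_to_sum (θ : ℝ) : Real.cos θ ^ (k + 1) * Real.cos (m * θ) =
        1 / 2 * (Real.cos θ ^ k * Real.cos ((m + 1 : ℤ) * θ))
          + 1 / 2 * (Real.cos θ ^ k * Real.cos ((m - 1 : ℤ) * θ)) := by
      push_cast
      rw [add_mul, sub_mul, one_mul, Real.cos_add, Real.cos_sub]
      ring
    simp only [product_to_sum]
    rw [intervalIntegral.integral_add, intervalIntegral.integral_const_mul,
      intervalIntegral.integral_const_mul, ih (by lia), ih (by lia)]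
    · simp
    all_goals exact Continuous.intervalIntegrable (by fun_prop) _ _

theorem integral_eval_cos_mul_sin_mul_sin_eq_zero {P : ℝ[X]} {N : ℕ} (hP : P.natDegree + 2 ≤ N) :
    ∫ θ in (0 : ℝ)..Real.pi, P.eval (Real.cos θ) * (Real.sin θ * Real.sin (N * θ)) = 0 := by
  have expand (θ : ℝ) : P.eval (Real.cos θ) * (Real.sin θ * Real.sin (N * θ)) =
      ∑ k ∈ Finset.range (P.natDegree + 1),
        (P.coeff k / 2 * (Real.cos θ ^ k * Real.cos ((N - 1 : ℤ) * θ))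
          - P.coeff k / 2 * (Real.cos θ ^ k * Real.cos ((N + 1 : ℤ) * θ))) := by
    rw [eval_eq_sum_range, Finset.sum_mul]
    refine Finset.sum_congr rfl fun k _ ↦ ?_
    push_cast
    rw [add_mul, sub_mul, one_mul, Real.cos_add, Real.cos_sub]
    ring
  simp only [expand]
  rw [intervalIntegral.integral_finsetSum fun k _ ↦
    Continuous.intervalIntegrable (by fun_prop) _ _]
  refine Finset.sum_eq_zero fun k hk ↦ ?_
  rw [Finset.mem_range] at hk
  rw [intervalIntegral.integral_sub, intervalIntegral.integral_const_mul,
    intervalIntegral.integral_const_mul, integral_cos_pow_mul_cos_int_mul_eq_zero (by lia),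
    integral_cos_pow_mul_cos_int_mul_eq_zero (by lia)]
  · simp
  all_goals exact Continuous.intervalIntegrable (by fun_prop) _ _

theorem integral_comp_cos_mul_sin {g : ℝ → ℝ} (hg : Continuous g) :
    ∫ θ in (0 : ℝ)..Real.pi, g (Real.cos θ) * Real.sin θ = ∫ y in (-1 : ℝ)..1, g y := by
  have := intervalIntegral.integral_comp_mul_deriv (a := 0) (b := Real.pi)
    (fun x _ ↦ Real.hasDerivAt_cos x) (by fun_prop) hg
  simp only [Function.comp, Real.cos_zero, Real.cos_pi, mul_neg] at this
  rwa [intervalIntegral.integral_neg, intervalIntegral.integral_symm (-1) 1, neg_inj] at this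

theorem abs_integral_comp_cos_mul_sin_mul_sin_le {f : ℝ → ℝ} {P : ℝ[X]} {N : ℕ}
    (hf : Continuous f) (hP : P.natDegree + 2 ≤ N) :
    |∫ θ in (0 : ℝ)..Real.pi, f (Real.cos θ) * (Real.sin θ * Real.sin (N * θ))|
      ≤ ∫ y in (-1 : ℝ)..1, |f y - P.eval y| := by
  have := P.continuous
  calc |∫ θ in (0 : ℝ)..Real.pi, f (Real.cos θ) * (Real.sin θ * Real.sin (N * θ))|
      = |∫ θ in (0 : ℝ)..Real.pi,
          (f (Real.cos θ) - P.eval (Real.cos θ)) * (Real.sin θ * Real.sin (N * θ))| := by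
        simp only [sub_mul]
        rw [intervalIntegral.integral_sub, integral_eval_cos_mul_sin_mul_sin_eq_zero hP, sub_zero]
        all_goals exact Continuous.intervalIntegrable (by fun_prop) _ _
    _ ≤ ∫ θ in (0 : ℝ)..Real.pi, |f (Real.cos θ) - P.eval (Real.cos θ)| * Real.sin θ := by
        refine (intervalIntegral.abs_integral_le_integral_abs Real.pi_pos.le).trans
          (intervalIntegral.integral_mono_on Real.pi_pos.le
            (Continuous.intervalIntegrable (by fun_prop) _ _)
            (Continuous.intervalIntegrable (by fun_prop) _ _) fun θ hθ ↦ ?_)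
        have sin_nonneg : 0 ≤ Real.sin θ := Real.sin_nonneg_of_mem_Icc hθ
        rw [abs_mul, abs_mul, abs_of_nonneg sin_nonneg]
        gcongr
        exact mul_le_of_le_one_right sin_nonneg (Real.abs_sin_le_one _)
    _ = ∫ y in (-1 : ℝ)..1, |f y - P.eval y| :=
        integral_comp_cos_mul_sin (g := fun y ↦ |f y - P.eval y|) (by fun_prop)

theorem integral_cos_mul_sin_mul_sin {c : ℝ} (hc : 2 < c) (a b : ℝ) :
    ∫ θ in a..b, Real.cos θ * (Real.sin θ * Real.sin (c * θ)) =
      1 / 4 * ((Real.sin ((c - 2) * b) - Real.sin ((c - 2) * a)) / (c - 2)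
        - (Real.sin ((c + 2) * b) - Real.sin ((c + 2) * a)) / (c + 2)) := by
  have product_to_sum (θ : ℝ) : Real.cos θ * (Real.sin θ * Real.sin (c * θ)) =
      1 / 4 * (Real.cos ((c - 2) * θ) - Real.cos ((c + 2) * θ)) := by
    rw [add_mul, sub_mul, Real.cos_add, Real.cos_sub, Real.sin_two_mul]
    ring
  simp only [product_to_sum]
  rw [intervalIntegral.integral_const_mul, intervalIntegral.integral_sub,
    intervalIntegral.integral_comp_mul_left Real.cos (by linarith : c - 2 ≠ 0),
    intervalIntegral.integral_comp_mul_left Real.cos (by linarith : c + 2 ≠ 0),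
    integral_cos, integral_cos, smul_eq_mul, smul_eq_mul, inv_mul_eq_div, inv_mul_eq_div]
  all_goals exact Continuous.intervalIntegrable (by fun_prop) _ _

theorem integral_abs_cos_mul {g : ℝ → ℝ} (hg : Continuous g) :
    ∫ θ in (0 : ℝ)..Real.pi, |Real.cos θ| * g θ =
      (∫ θ in (0 : ℝ)..(Real.pi / 2), Real.cos θ * g θ)
        - ∫ θ in (Real.pi / 2)..Real.pi, Real.cos θ * g θ := by
  have hpi := Real.pi_pos
  rw [← intervalIntegral.integral_add_adjacent_intervals (b := Real.pi / 2), sub_eq_add_neg,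
    ← intervalIntegral.integral_neg]
  · congr 1 <;> refine intervalIntegral.integral_congr fun θ hθ ↦ ?_ <;>
      rw [uIcc_of_le (by linarith)] at hθ
    · simp only [abs_of_nonneg (Real.cos_nonneg_of_mem_Icc ⟨by linarith [hθ.1], hθ.2⟩)]
    · simp only [abs_of_nonpos
        (Real.cos_nonpos_of_pi_div_two_le_of_le hθ.1 (by linarith [hθ.2])), neg_mul]
  all_goals exact Continuous.intervalIntegrable (by fun_prop) _ _

theorem abs_integral_abs_cos_mul_sin_mul_sin {k : ℕ} (hk : 1 ≤ k) :
    |∫ θ in (0 : ℝ)..Real.pi, |Real.cos θ| * (Real.sin θ * Real.sin ((2 * k + 1 : ℕ) * θ))|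
      = 2 / (((2 * k + 1 : ℕ) : ℝ) ^ 2 - 4) := by
  have hk' : (1 : ℝ) ≤ k := by exact_mod_cast hk
  push_cast
  set c : ℝ := 2 * k + 1 with hc
  have c_ge : 3 ≤ c := by linarith
  have sin_sub_half : Real.sin ((c - 2) * (Real.pi / 2)) = -Real.cos (k * Real.pi) := by
    rw [← Real.sin_sub_pi_div_two, hc]
    ring_nf
  have sin_add_half : Real.sin ((c + 2) * (Real.pi / 2)) = -Real.cos (k * Real.pi) := by
    rw [← Real.sin_add_pi_div_two, ← Real.sin_add_pi, hc]
    ring_nf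
  have sin_sub : Real.sin ((c - 2) * Real.pi) = 0 := by
    convert Real.sin_int_mul_pi (2 * k - 1) using 2
    push_cast
    ring
  have sin_add : Real.sin ((c + 2) * Real.pi) = 0 := by
    convert Real.sin_int_mul_pi (2 * k + 3) using 2
    push_cast
    ring
  have value : ∫ θ in (0 : ℝ)..Real.pi, |Real.cos θ| * (Real.sin θ * Real.sin (c * θ))
      = -(2 / (c ^ 2 - 4)) * Real.cos (k * Real.pi) := by
    rw [integral_abs_cos_mul (by fun_prop), integral_cos_mul_sin_mul_sin (by linarith),
      integral_cos_mul_sin_mul_sin (by linarith), sin_sub_half, sin_add_half, sin_sub, sin_add,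
      mul_zero, mul_zero, Real.sin_zero, show c ^ 2 - 4 = (c - 2) * (c + 2) by ring]
    have : c - 2 ≠ 0 := by linarith
    field_simp
    ring
  rw [value, abs_mul, abs_neg, ← Int.cast_natCast, Real.abs_cos_int_mul_pi, mul_one, abs_of_pos]
  have : 0 < c ^ 2 - 4 := by nlinarith
  positivity

theorem le_integral_abs_abs_sub_eval {P : ℝ[X]} {n : ℕ} (hn : 1 ≤ n) (hP : P.natDegree ≤ n) :
    1 / (8 * (n : ℝ) ^ 2) ≤ ∫ y in (-1 : ℝ)..1, |(|y| - P.eval y)| := by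
  obtain ⟨k, lower, upper⟩ : ∃ k : ℕ, n + 2 ≤ 2 * k + 1 ∧ 2 * k + 1 ≤ n + 3 :=
    ⟨(n + 2) / 2, by lia, by lia⟩
  refine le_trans ?_ (abs_integral_comp_cos_mul_sin_mul_sin_le (N := 2 * k + 1) continuous_abs
    (by lia))
  rw [abs_integral_abs_cos_mul_sin_mul_sin (by lia)]
  have hn' : (1 : ℝ) ≤ n := by exact_mod_cast hn
  have lower' : (n : ℝ) + 2 ≤ (2 * k + 1 : ℕ) := by exact_mod_cast lower
  have upper' : ((2 * k + 1 : ℕ) : ℝ) ≤ n + 3 := by exact_mod_cast upper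
  rw [div_le_div_iff₀ (by positivity) (by nlinarith)]
  nlinarith

theorem le_integral_symm_abs_abs_sub_eval {P : ℝ[X]} {n : ℕ} {a : ℝ} (ha : 0 < a) (hn : 1 ≤ n)
    (hP : P.natDegree ≤ n) :
    a ^ 2 / (8 * (n : ℝ) ^ 2) ≤ ∫ x in -a..a, |(|x| - P.eval x)| := by
  set Q : ℝ[X] := C a⁻¹ * P.comp (C a * X) with hQ
  have natDegree_Q : Q.natDegree ≤ n := by
    refine (natDegree_C_mul_le _ _).trans (natDegree_comp_le.trans ?_)
    rwa [natDegree_C_mul_X a ha.ne', mul_one]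
  have rescale (y : ℝ) : |(|y| - Q.eval y)| = a⁻¹ * |(|a * y| - P.eval (a * y))| := by
    rw [← abs_of_pos (inv_pos.2 ha), ← abs_mul, mul_sub, abs_mul a y,
      abs_of_pos ha, inv_mul_cancel_left₀ ha.ne']
    simp [hQ]
  have := le_integral_abs_abs_sub_eval hn natDegree_Q
  simp only [rescale] at this
  rw [intervalIntegral.integral_const_mul,
    intervalIntegral.integral_comp_mul_left (fun x ↦ |(|x| - P.eval x)|) ha.ne', smul_eq_mul,
    mul_neg, mul_one, ← mul_assoc, ← mul_inv, le_inv_mul_iff₀ (by positivity)] at this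
  exact le_of_eq_of_le (by ring) this

variable {α β : ℝ}

theorem ofReal_le_En_abs {n : ℕ} (hα : 0 ≤ α) (hβ : 0 ≤ β) (hn : 1 ≤ n) :
    ENNReal.ofReal ((2 ^ (α + β))⁻¹ / (32 * n ^ 2)) ≤ En n (|·|) (jacobi α β) 1 := by
  refine le_iInf₂ fun P hP ↦ ?_
  have := P.continuous
  have hw_cont := continuous_jacobi hα hβ
  refine (ENNReal.ofReal_le_ofReal ?_).trans (ofReal_integral_abs_le_LpOn_one (c := -(1 / 2))
    (d := 1 / 2) (by fun_prop) (by norm_num) (Icc_subset_Icc (by norm_num) (by norm_num)))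
  calc (2 ^ (α + β))⁻¹ / (32 * (n : ℝ) ^ 2)
      = (2 ^ (α + β))⁻¹ * ((1 / 2) ^ 2 / (8 * (n : ℝ) ^ 2)) := by ring
    _ ≤ (2 ^ (α + β))⁻¹ * ∫ x in -(1 / 2 : ℝ)..1 / 2, |(|x| - P.eval x)| := by
        gcongr
        exact le_integral_symm_abs_abs_sub_eval (by norm_num) hn hP
    _ = ∫ x in -(1 / 2 : ℝ)..1 / 2, (2 ^ (α + β))⁻¹ * |(|x| - P.eval x)| :=
        (intervalIntegral.integral_const_mul _ _).symm
    _ ≤ ∫ x in -(1 / 2 : ℝ)..1 / 2, |jacobi α β x * (|x| - P.eval x)| := by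
        refine intervalIntegral.integral_mono_on (by norm_num)
          (Continuous.intervalIntegrable (by fun_prop) _ _)
          (Continuous.intervalIntegrable (by fun_prop) _ _) fun x hx ↦ ?_
        have hx' : x ∈ Icc (-1 : ℝ) 1 := ⟨by linarith [hx.1], by linarith [hx.2]⟩
        rw [abs_mul, abs_of_nonneg (jacobi_nonneg hx')]
        gcongr
        rw [inv_le_iff_one_le_mul₀' (by positivity), ← jacobi_zero (α := α) (β := β)]
        exact jacobi_le_rpow_mul hα hβ zero_lt_two (by simp) hx' (by linarith [hx.1])
          (by linarith [hx.2])

theorem En_le_LpOn_mul_EClass {n : ℕ} {p q : ℝ≥0∞} {wt f : ℝ → ℝ}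
    (hf : ConvexOn ℝ (Ioo (-1) 1) f) (f_meas : Measurable f)
    (norm_ne_zero : LpOn (fun x ↦ jacobi α β x * f x) p (-1) 1 ≠ 0)
    (norm_ne_top : LpOn (fun x ↦ jacobi α β x * f x) p (-1) 1 ≠ ⊤) :
    En n f wt q ≤ LpOn (fun x ↦ jacobi α β x * f x) p (-1) 1
      * EClass (MSet 2 ∩ BSet p α β) n wt q := by
  set m := LpOn (fun x ↦ jacobi α β x * f x) p (-1) 1 with hm
  have m_pos : 0 < m.toReal := ENNReal.toReal_pos norm_ne_zero norm_ne_top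
  have enorm_m : ‖m.toReal‖ₑ = m := by
    rw [Real.enorm_of_nonneg m_pos.le, ENNReal.ofReal_toReal norm_ne_top]
  have mem : (fun x ↦ m.toReal⁻¹ * f x) ∈ MSet 2 ∩ BSet p α β := by
    refine ⟨kMonotoneOn_two_iff_convexOn.2 (hf.smul (by positivity)), f_meas.const_mul _, ?_⟩
    have : (fun x ↦ jacobi α β x * (m.toReal⁻¹ * f x))
        = m.toReal⁻¹ • fun x ↦ jacobi α β x * f x := by
      ext x
      simp only [Pi.smul_apply, smul_eq_mul]
      ring
    rw [LpOn, this, eLpNorm_const_smul, ← LpOn, ← hm, enorm_inv m_pos.ne', enorm_m,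
      ENNReal.inv_mul_cancel norm_ne_zero norm_ne_top]
  calc En n f wt q = En n (fun x ↦ m.toReal * (m.toReal⁻¹ * f x)) wt q := by
        simp only [mul_inv_cancel_left₀ m_pos.ne']
    _ ≤ ‖m.toReal‖ₑ * En n (fun x ↦ m.toReal⁻¹ * f x) wt q := En_const_mul_le _
    _ ≤ m * EClass (MSet 2 ∩ BSet p α β) n wt q := by
        rw [enorm_m]
        gcongr
        exact le_iSup₂ (f := fun g _ ↦ En n g wt q) _ mem

theorem LpOn_top_jacobi_mul_abs_le (hα : 0 ≤ α) (hβ : 0 ≤ β) :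
    LpOn (fun x ↦ jacobi α β x * |x|) ∞ (-1) 1 ≤ ENNReal.ofReal (2 ^ (α + β)) := by
  rw [LpOn, eLpNorm_exponent_top]
  refine eLpNormEssSup_le_of_ae_bound ?_
  filter_upwards [ae_restrict_mem measurableSet_Icc] with x hx
  rw [Real.norm_eq_abs, abs_mul, abs_abs, abs_of_nonneg (jacobi_nonneg hx)]
  exact (mul_le_of_le_one_right (jacobi_nonneg hx) (abs_le.2 hx)).trans
    (jacobi_le_two_rpow hα hβ hx)

theorem LpOn_top_jacobi_mul_abs_ne_zero (hα : 0 ≤ α) (hβ : 0 ≤ β) :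
    LpOn (fun x ↦ jacobi α β x * |x|) ∞ (-1) 1 ≠ 0 := by
  intro norm_eq_zero
  have cont : Continuous fun x ↦ jacobi α β x * |x| :=
    (continuous_jacobi hα hβ).mul continuous_abs
  rw [LpOn, eLpNorm_eq_zero_iff cont.aestronglyMeasurable (by simp)] at norm_eq_zero
  have eq_zero : jacobi α β (1 / 2) * |1 / 2| = 0 :=
    Measure.eqOn_Icc_of_ae_eq (μ := volume) (by norm_num) norm_eq_zero cont.continuousOn
      continuousOn_const (by norm_num)
  have : 0 < jacobi α β (1 / 2) := jacobi_pos (by norm_num)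
  exact absurd eq_zero (by positivity)

theorem exists_le_EClass (hα : 0 ≤ α) (hβ : 0 ≤ β) :
    ∃ c > (0 : ℝ), ∀ n : ℕ, 1 ≤ n →
      ENNReal.ofReal (c / n ^ 2) ≤ EClass (MSet 2 ∩ BSet ∞ α β) n (jacobi α β) 1 := by
  refine ⟨((2 : ℝ) ^ (α + β))⁻¹ * ((2 ^ (α + β))⁻¹ / 32), by positivity, fun n hn ↦ ?_⟩
  have norm_le := LpOn_top_jacobi_mul_abs_le hα hβ
  have En_le := (ofReal_le_En_abs hα hβ hn).trans (En_le_LpOn_mul_EClass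
    (convexOn_norm (convex_Ioo _ _)) measurable_norm (LpOn_top_jacobi_mul_abs_ne_zero hα hβ)
    (norm_le.trans_lt ENNReal.ofReal_lt_top).ne)
  rw [mul_div_assoc, ENNReal.ofReal_mul (by positivity), ENNReal.ofReal_inv_of_pos (by positivity),
    ENNReal.inv_mul_le_iff (by positivity) ENNReal.ofReal_ne_top]
  calc ENNReal.ofReal ((2 ^ (α + β))⁻¹ / 32 / n ^ 2)
      = ENNReal.ofReal ((2 ^ (α + β))⁻¹ / (32 * n ^ 2)) := by rw [div_div]
    _ ≤ _ := En_le
    _ ≤ _ := by gcongr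

end LowerBound

theorem statement6 (α β : ℝ) (hα : 0 ≤ α) (hβ : 0 ≤ β) (hne : ¬(α = 0 ∧ β = 0)) :
    ∃ c₁ > (0 : ℝ), ∃ c₂ > (0 : ℝ), ∀ n : ℕ, 1 ≤ n →
      ENNReal.ofReal (c₁ * (n : ℝ) ^ (-2 : ℝ)) ≤
        EClass (MSet 2 ∩ BSet ∞ α β) n (jacobi α β) 1 ∧
      EClass (MSet 2 ∩ BSet ∞ α β) n (jacobi α β) 1 ≤
        ENNReal.ofReal (c₂ * (n : ℝ) ^ (-2 : ℝ) * Real.log ((n : ℝ) + 1)) := by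
  obtain ⟨c₁, c₁_pos, lower⟩ := exists_le_EClass hα hβ
  obtain ⟨c₂, c₂_pos, upper⟩ := exists_EClass_le hα hβ
  refine ⟨c₁, c₁_pos, c₂, c₂_pos, fun n hn ↦ ?_⟩
  rw [Real.rpow_neg n.cast_nonneg, Real.rpow_two, mul_right_comm]
  exact ⟨lower n hn, upper n hn⟩
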